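/- arXiv:1503.01704 — 12 statements merged into one kernel-verified Lean document; each statement's English description precedes it below -/
import Mathlib

section
/- Let G ↷ X and H ↷ Y be topological dynamical systems with H ↷ Y topologically free, let φ : X → Y be a homeomorphism, and let a : G × X → H be locally constant in the space variable and satisfy φ(g.x) = a(g,x).φ(x) for all g ∈ G and x ∈ X. Then a(g₁g₂, x) = a(g₁, g₂.x)·a(g₂, x) for all g₁, g₂ ∈ G and x ∈ X. -/
/-- A topological dynamical system `G ↷ X` is *topologically free* if for every
`g ≠ 1` the set of points moved by `g` is dense. -/
def TopologicallyFree (G : Type*) (X : Type*) [Group G] [TopologicalSpace X]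
    [MulAction G X] : Prop :=
  ∀ g : G, g ≠ 1 → Dense {x : X | g • x ≠ x}

/-- If `H ↷ Y` is topologically free, `φ : X ≃ₜ Y` is a homeomorphism and
`a : G × X → H` is locally constant in the space variable and satisfies
`φ(g.x) = a(g,x).φ(x)`, then `a` satisfies the cocycle identity. -/
theorem cocycle_identity
    (G : Type*) (X : Type*) (H : Type*) (Y : Type*)
    [Group G] [Group H]
    [TopologicalSpace X] [LocallyCompactSpace X] [T2Space X]
    [TopologicalSpace Y] [LocallyCompactSpace Y] [T2Space Y]
    [MulAction G X] [ContinuousConstSMul G X]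
    [MulAction H Y] [ContinuousConstSMul H Y]
    (hY : TopologicallyFree H Y)
    (φ : X ≃ₜ Y) (a : G → X → H)
    (ha : ∀ g : G, IsLocallyConstant (a g))
    (hφ : ∀ (g : G) (x : X), φ (g • x) = a g x • φ x) :
    ∀ (g₁ g₂ : G) (x : X), a (g₁ * g₂) x = a g₁ (g₂ • x) * a g₂ x := by
  intro g₁ g₂ x
  have hb : IsLocallyConstant
      (fun x => (a g₁ (g₂ • x) * a g₂ x)⁻¹ * a (g₁ * g₂) x) :=
    ((((ha g₁).comp_continuous (continuous_const_smul g₂)).mul (ha g₂)).inv).mul (ha (g₁ * g₂))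
  have hfix : ∀ x, ((a g₁ (g₂ • x) * a g₂ x)⁻¹ * a (g₁ * g₂) x) • φ x = φ x := by
    intro x
    rw [mul_smul, inv_smul_eq_iff, ← hφ, mul_smul, hφ, hφ, mul_smul]
  by_contra hne
  have hne' : (a g₁ (g₂ • x) * a g₂ x)⁻¹ * a (g₁ * g₂) x ≠ 1 := by
    intro h
    exact hne (inv_mul_eq_one.mp h).symm
  obtain ⟨U, hU, hxU, hc⟩ := hb.exists_open x
  have hV : IsOpen (φ '' U) := φ.isOpenMap U hU
  obtain ⟨_, ⟨z, hz, rfl⟩, hm⟩ :=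
    (hY _ hne').inter_open_nonempty _ hV ⟨φ x, x, hxU, rfl⟩
  apply hm
  have h1 := hfix z
  have h2 := hc z hz
  rw [h2] at h1
  exact h1
end

section
/- Let G ↷ X and H ↷ Y be topologically free systems which are continuously orbit equivalent via (φ, a, b), with ψ = φ⁻¹. Then b(a(g,x), φ(x)) = g for all g ∈ G and x ∈ X; moreover b is uniquely determined by this identity: if b' : H × Y → G is locally constant in the space variable and satisfies b'(a(g,x), φ(x)) = g for all g ∈ G, x ∈ X, then b' = b. -/
theorem b_a_aux
    {G : Type*} {X : Type*} {H : Type*} {Y : Type*}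
    [Group G] [Group H] [TopologicalSpace X] [TopologicalSpace Y]
    [MulAction G X] [MulAction H Y]
    (hX : TopologicallyFree G X)
    (φ : X ≃ₜ Y) (a : G → X → H) (b : H → Y → G)
    (ha : ∀ g : G, IsLocallyConstant (a g))
    (hb : ∀ h : H, IsLocallyConstant (b h))
    (hφ : ∀ (g : G) (x : X), φ (g • x) = a g x • φ x)
    (hψ : ∀ (h : H) (y : Y), φ.symm (h • y) = b h y • φ.symm y)
    (g : G) (x : X) : b (a g x) (φ x) = g := by
  by_contra hne
  have hd := hX ((b (a g x) (φ x))⁻¹ * g) (fun h => hne (inv_mul_eq_one.mp h))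
  have h1 := (ha g).eventually_eq x
  have h2 := φ.continuous.continuousAt.eventually ((hb (a g x)).eventually_eq (φ x))
  obtain ⟨x', hx', h1', h2'⟩ := (hd.inter_nhds_nonempty (h1.and h2))
  apply hx'
  rw [mul_smul, inv_smul_eq_iff, ← h2']
  have := hψ (a g x) (φ x')
  rw [← h1', ← hφ, h1'] at this
  simpa using this

/-- For topologically free systems which are continuously orbit equivalent via
`(φ, a, b)`, one has `b (a g x) (φ x) = g` for all `g, x`, and `b` is the unique
locally constant (in the space variable) map with this property. -/
theorem b_a_phi_eq_and_unique
    (G : Type*) (X : Type*) (H : Type*) (Y : Type*)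
    [Group G] [Group H]
    [TopologicalSpace X] [LocallyCompactSpace X] [T2Space X]
    [TopologicalSpace Y] [LocallyCompactSpace Y] [T2Space Y]
    [MulAction G X] [ContinuousConstSMul G X]
    [MulAction H Y] [ContinuousConstSMul H Y]
    (hX : TopologicallyFree G X) (hY : TopologicallyFree H Y)
    (φ : X ≃ₜ Y) (a : G → X → H) (b : H → Y → G)
    (ha : ∀ g : G, IsLocallyConstant (a g))
    (hb : ∀ h : H, IsLocallyConstant (b h))
    (hφ : ∀ (g : G) (x : X), φ (g • x) = a g x • φ x)
    (hψ : ∀ (h : H) (y : Y), φ.symm (h • y) = b h y • φ.symm y) :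
    (∀ (g : G) (x : X), b (a g x) (φ x) = g) ∧
    (∀ b' : H → Y → G, (∀ h : H, IsLocallyConstant (b' h)) →
      (∀ (g : G) (x : X), b' (a g x) (φ x) = g) → b' = b) := by
  refine ⟨b_a_aux hX φ a b ha hb hφ hψ, fun b' _ h => ?_⟩
  funext k y
  have := b_a_aux hY φ.symm b a hb ha hψ (by simpa using hφ) k y
  have h2 := h (b k y) (φ.symm y)
  rwa [this, φ.apply_symm_apply] at h2
end

section
/- Let G ↷ X and H ↷ Y be topologically free systems which are continuously orbit equivalent via (φ, a, b), with ψ = φ⁻¹. Let X_f = {x ∈ X : the G-stabilizer of x is trivial} and Y_f = {y ∈ Y : the H-stabilizer of y is trivial}. Then φ(X_f) = Y_f; in particular, for every x ∈ X_f the map G → H, g ↦ a(g, x), is a bijection. -/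
theorem free_point_aux
    {G : Type*} {X : Type*} {H : Type*} {Y : Type*}
    [Group G] [Group H] [TopologicalSpace X] [TopologicalSpace Y]
    [MulAction G X] [MulAction H Y]
    (hY : TopologicallyFree H Y)
    (ψ : Y ≃ₜ X) (b : H → Y → G)
    (hb : ∀ h : H, IsLocallyConstant (b h))
    (hψ : ∀ (h : H) (y : Y), ψ (h • y) = b h y • ψ y)
    (y : Y) (hy : ∀ g : G, g • ψ y = ψ y → g = 1) :
    ∀ h : H, h • y = y → h = 1 := by
  intro h hh
  by_contra hne
  have h1 : b h y = 1 := hy _ (by rw [← hψ, hh])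
  have hopen : IsOpen {z : Y | b h z = 1} := (hb h).isOpen_fiber 1
  obtain ⟨z, hz, hz2⟩ := (hY h hne).inter_open_nonempty _ hopen ⟨y, h1⟩
  have hz1 : b h z = 1 := hz
  apply hz2
  apply ψ.injective
  rw [hψ, hz1, one_smul]

/-- For topologically free systems which are continuously orbit equivalent via
`(φ, a, b)`, the homeomorphism `φ` maps the set of points with trivial `G`-stabilizer
onto the set of points with trivial `H`-stabilizer; in particular, for every `x`
with trivial `G`-stabilizer, `g ↦ a g x` is a bijection. -/
theorem phi_maps_free_points_to_free_points
    (G : Type*) (X : Type*) (H : Type*) (Y : Type*)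
    [Group G] [Group H]
    [TopologicalSpace X] [LocallyCompactSpace X] [T2Space X]
    [TopologicalSpace Y] [LocallyCompactSpace Y] [T2Space Y]
    [MulAction G X] [ContinuousConstSMul G X]
    [MulAction H Y] [ContinuousConstSMul H Y]
    (hX : TopologicallyFree G X) (hY : TopologicallyFree H Y)
    (φ : X ≃ₜ Y) (a : G → X → H) (b : H → Y → G)
    (ha : ∀ g : G, IsLocallyConstant (a g))
    (hb : ∀ h : H, IsLocallyConstant (b h))
    (hφ : ∀ (g : G) (x : X), φ (g • x) = a g x • φ x)
    (hψ : ∀ (h : H) (y : Y), φ.symm (h • y) = b h y • φ.symm y) :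
    φ '' {x : X | ∀ g : G, g • x = x → g = 1} = {y : Y | ∀ h : H, h • y = y → h = 1} ∧
    (∀ x ∈ {x : X | ∀ g : G, g • x = x → g = 1},
      Function.Bijective (fun g : G => a g x)) := by
  have key : ∀ x : X, (∀ g : G, g • x = x → g = 1) → ∀ h : H, h • φ x = φ x → h = 1 := by
    intro x hx
    exact free_point_aux hY φ.symm b hb hψ (φ x) (by simpa using hx)
  refine ⟨?_, ?_⟩
  · ext y
    constructor
    · rintro ⟨x, hx, rfl⟩
      exact key x hx
    · intro hy
      refine ⟨φ.symm y, ?_, φ.apply_symm_apply y⟩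
      exact free_point_aux hX φ a ha hφ (φ.symm y) (by simpa using hy)
  · intro x hx
    constructor
    · intro g g' hg
      have hg1 : a g x = a g' x := hg
      have h1 : g • x = g' • x := φ.injective (by rw [hφ, hφ, hg1])
      have h2 := hx (g'⁻¹ * g) (by rw [mul_smul, h1, inv_smul_smul])
      exact (inv_mul_eq_one.mp h2).symm
    · intro h
      refine ⟨b h (φ x), ?_⟩
      have h1 : a (b h (φ x)) x • φ x = h • φ x := by
        rw [← hφ]
        have := hψ h (φ x)
        rw [φ.symm_apply_apply] at this
        rw [← this, φ.apply_symm_apply]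
      have h2 := key x hx (h⁻¹ * a (b h (φ x)) x) (by rw [mul_smul, h1, inv_smul_smul])
      exact (inv_mul_eq_one.mp h2).symm
end

section
/- Let G ↷ X be a topologically free system on a connected (hence nonempty) locally compact Hausdorff space X, and let H ↷ Y be a topologically free system. If G ↷ X and H ↷ Y are continuously orbit equivalent via (φ, a, b), then they are conjugate; indeed, there is a group isomorphism ρ : G → H such that the same homeomorphism φ satisfies φ(g.x) = ρ(g).φ(x) for all g ∈ G, x ∈ X. -/
/-- If `G ↷ X` is a topologically free system on a connected (hence nonempty) locally
compact Hausdorff space `X` and `H ↷ Y` is a topologically free system which is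
continuously orbit equivalent to `G ↷ X` via `(φ, a, b)`, then the systems are
conjugate: indeed, there is a group isomorphism `ρ : G ≃* H` such that the same
homeomorphism `φ` intertwines the actions. -/
theorem conjugate_of_coe_of_connected
    (G : Type*) (X : Type*) (H : Type*) (Y : Type*)
    [Group G] [Group H]
    [TopologicalSpace X] [LocallyCompactSpace X] [T2Space X] [ConnectedSpace X]
    [TopologicalSpace Y] [LocallyCompactSpace Y] [T2Space Y]
    [MulAction G X] [ContinuousConstSMul G X]
    [MulAction H Y] [ContinuousConstSMul H Y]
    (hX : TopologicallyFree G X) (hY : TopologicallyFree H Y)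
    (φ : X ≃ₜ Y) (a : G → X → H) (b : H → Y → G)
    (ha : ∀ g : G, IsLocallyConstant (a g))
    (hb : ∀ h : H, IsLocallyConstant (b h))
    (hφ : ∀ (g : G) (x : X), φ (g • x) = a g x • φ x)
    (hψ : ∀ (h : H) (y : Y), φ.symm (h • y) = b h y • φ.symm y) :
    ∃ ρ : G ≃* H, ∀ (g : G) (x : X), φ (g • x) = ρ g • φ x := by
  have fG : ∀ g g' : G, (∀ x : X, g • x = g' • x) → g = g' := by
    intro g g' h
    by_contra hne
    have hd := hX (g'⁻¹ * g) (by
      intro h1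
      exact hne (inv_mul_eq_one.mp h1).symm)
    obtain ⟨x, hx⟩ := hd.nonempty
    apply hx
    rw [mul_smul, h x, inv_smul_smul]
  have x0 : X := Classical.arbitrary X
  haveI : Nonempty Y := ⟨φ x0⟩
  have fH : ∀ g g' : H, (∀ x : Y, g • x = g' • x) → g = g' := by
    intro g g' h
    by_contra hne
    have hd := hY (g'⁻¹ * g) (by
      intro h1
      exact hne (inv_mul_eq_one.mp h1).symm)
    obtain ⟨x, hx⟩ := hd.nonempty
    apply hx
    rw [mul_smul, h x, inv_smul_smul]
  haveI : ConnectedSpace Y := φ.surjective.connectedSpace φ.continuous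
  have h1 : ∀ (g : G) (x : X), φ (g • x) = a g x0 • φ x := by
    intro g x
    rw [hφ, (ha g).apply_eq_of_preconnectedSpace x x0]
  have h2 : ∀ (h : H) (y : Y), φ.symm (h • y) = b h (φ x0) • φ.symm y := by
    intro h y
    rw [hψ, (hb h).apply_eq_of_preconnectedSpace y (φ x0)]
  refine ⟨{ toFun := fun g => a g x0, invFun := fun h => b h (φ x0),
            left_inv := ?_, right_inv := ?_, map_mul' := ?_ }, h1⟩
  · intro g
    apply fG
    intro x
    have := h2 (a g x0) (φ x)
    rw [← h1] at this
    simpa using this.symm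
  · intro h
    apply fH
    intro y
    have := h1 (b h (φ x0)) (φ.symm y)
    rw [← h2] at this
    simpa using this.symm
  · intro g g'
    apply fH
    intro y
    have e := h1 (g * g') (φ.symm y)
    rw [mul_smul, h1, h1] at e
    simpa [mul_smul] using e.symm
end

section
/- Let p be a prime and l ≥ 1 an integer with gcd(l, p) = 1. Consider the action of ℤ on ZMod l × ℤ_p by m.(k, x) = (k + m, x + m) (diagonal translation, i.e. the odometer for l·p^∞), and the action of the group ZMod l × ℤ on ZMod l × ℤ_p by (j, m).(k, x) = (k + j, x + m). Then these two topological dynamical systems are continuously orbit equivalent. -/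
/-- `ZMod n` is given the discrete topology. -/
instance (n : ℕ) : TopologicalSpace (ZMod n) := ⊥
instance (n : ℕ) : DiscreteTopology (ZMod n) := ⟨rfl⟩

/-- The odometer action of `ℤ` on `ZMod l × ℤ_p` by diagonal translation
(the odometer for `l·p^∞`). -/
noncomputable def odo (p l : ℕ) [Fact p.Prime] (m : ℤ) (x : ZMod l × ℤ_[p]) : ZMod l × ℤ_[p] :=
  (x.1 + (m : ZMod l), x.2 + (m : ℤ_[p]))

/-- The action of `ZMod l × ℤ` on `ZMod l × ℤ_p` by translation in each factor. -/
noncomputable def prodAct (p l : ℕ) [Fact p.Prime] (j : ZMod l × ℤ) (x : ZMod l × ℤ_[p]) :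
    ZMod l × ℤ_[p] :=
  (x.1 + j.1, x.2 + (j.2 : ℤ_[p]))

/-- For a prime `p` and `l ≥ 1` with `gcd(l, p) = 1`, the odometer
`ℤ ↷ ZMod l × ℤ_p` and the product action `ZMod l × ℤ ↷ ZMod l × ℤ_p` are
continuously orbit equivalent. -/
theorem odometer_coe_prod (p l : ℕ) [Fact p.Prime] (hl : 1 ≤ l)
    (hcop : Nat.Coprime l p) :
    ∃ (φ : (ZMod l × ℤ_[p]) ≃ₜ (ZMod l × ℤ_[p]))
      (a : ℤ → ZMod l × ℤ_[p] → ZMod l × ℤ)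
      (b : ZMod l × ℤ → ZMod l × ℤ_[p] → ℤ),
      (∀ g : ℤ, IsLocallyConstant (a g)) ∧
      (∀ h : ZMod l × ℤ, IsLocallyConstant (b h)) ∧
      (∀ (g : ℤ) (x : ZMod l × ℤ_[p]), φ (odo p l g x) = prodAct p l (a g x) (φ x)) ∧
      (∀ (h : ZMod l × ℤ) (y : ZMod l × ℤ_[p]),
        φ.symm (prodAct p l h y) = odo p l (b h y) (φ.symm y)) := by
  haveI : NeZero l := ⟨by omega⟩
  have hu : IsUnit (l : ℤ_[p]) := by
    rw [PadicInt.isUnit_iff, PadicInt.norm_natCast_eq_one_iff]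
    exact hcop.symm
  obtain ⟨u, hu'⟩ := hu.exists_right_inv
  have hval : Continuous (fun k : ZMod l => ((k.val : ℕ) : ℤ_[p])) := continuous_of_discreteTopology
  let φ : (ZMod l × ℤ_[p]) ≃ₜ (ZMod l × ℤ_[p]) :=
    { toFun := fun x => (x.1, u * (x.2 - (x.1.val : ℤ_[p])))
      invFun := fun y => (y.1, l * y.2 + (y.1.val : ℤ_[p]))
      left_inv := by
        rintro ⟨k, x⟩
        refine Prod.ext rfl ?_
        change (l : ℤ_[p]) * (u * (x - (k.val : ℤ_[p]))) + (k.val : ℤ_[p]) = x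
        linear_combination (x - (k.val : ℤ_[p])) * hu'
      right_inv := by
        rintro ⟨k, x⟩
        refine Prod.ext rfl ?_
        change u * (l * x + (k.val : ℤ_[p]) - (k.val : ℤ_[p])) = x
        linear_combination x * hu'
      continuous_toFun := continuous_fst.prodMk
        (continuous_const.mul (continuous_snd.sub (hval.comp continuous_fst)))
      continuous_invFun := continuous_fst.prodMk
        ((continuous_const.mul continuous_snd).add (hval.comp continuous_fst)) }
  have hlc : ∀ {α : Type} (f : ZMod l → α),
      IsLocallyConstant (fun x : ZMod l × ℤ_[p] => f x.1) := fun f =>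
    (IsLocallyConstant.of_discrete f).comp_continuous continuous_fst
  refine ⟨φ, fun g x => ((g : ZMod l), (g - ((x.1 + (g : ZMod l)).val : ℤ) + (x.1.val : ℤ)) / (l : ℤ)),
    fun h y => h.2 * (l : ℤ) + ((y.1 + h.1).val : ℤ) - (y.1.val : ℤ),
    fun g => hlc (fun k => ((g : ZMod l), (g - ((k + (g : ZMod l)).val : ℤ) + (k.val : ℤ)) / (l : ℤ))),
    fun h => hlc (fun k => h.2 * (l : ℤ) + ((k + h.1).val : ℤ) - (k.val : ℤ)), ?_, ?_⟩
  · rintro g ⟨k, x⟩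
    refine Prod.ext rfl ?_
    have hd : (l : ℤ) ∣ (g - ((k + (g : ZMod l)).val : ℤ) + (k.val : ℤ)) := by
      rw [← ZMod.intCast_zmod_eq_zero_iff_dvd]
      push_cast
      simp
    obtain ⟨c, hc⟩ := hd
    change u * (x + (g : ℤ_[p]) - ((k + (g : ZMod l)).val : ℤ_[p])) =
      u * (x - (k.val : ℤ_[p])) +
        (((g - ((k + (g : ZMod l)).val : ℤ) + (k.val : ℤ)) / (l : ℤ) : ℤ) : ℤ_[p])
    have hc' := congrArg (fun z : ℤ => (z : ℤ_[p])) hc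
    rw [hc, Int.mul_ediv_cancel_left _ (by omega)]
    push_cast at hc'
    linear_combination u * hc' + c * hu'
  · rintro ⟨j, n⟩ ⟨k, y⟩
    refine Prod.ext ?_ ?_
    · change k + j = k + ((n * (l : ℤ) + ((k + j).val : ℤ) - (k.val : ℤ) : ℤ) : ZMod l)
      push_cast
      simp
    · change (l : ℤ_[p]) * (y + (n : ℤ_[p])) + ((k + j).val : ℤ_[p]) = l * y + (k.val : ℤ_[p]) +
        ((n * (l : ℤ) + ((k + j).val : ℤ) - (k.val : ℤ) : ℤ) : ℤ_[p])
      push_cast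
      ring
end

section
/- Let r ≥ 2, let p ≠ q be primes, and let n > 1 be an integer with gcd(p, n) = 1 = gcd(q, n). Let ℤ^r act on Z = (ZMod n × ℤ_p) × ℤ_q × (Fin (r−2) → ℤ_p) so that the first standard generator acts by diagonal translation (k, x) ↦ (k + 1, x + 1) on the first factor, the second standard generator acts by x ↦ x + 1 on the factor ℤ_q, and for each i the (i+2)-nd standard generator adds 1 in the i-th coordinate of the last factor; let ℤ^r act on W = ℤ_p × (ZMod n × ℤ_q) × (Fin (r−2) → ℤ_p) analogously, with the first generator translating ℤ_p by 1 and the second generator acting by diagonal translation on ZMod n × ℤ_q. Then ℤ^r ↷ Z and ℤ^r ↷ W are continuously orbit equivalent. -/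
/-- The action of `ℤ^r` (with `r = s + 2`) on
`Z = (ZMod n × ℤ_p) × ℤ_q × (Fin s → ℤ_p)`: the first standard generator acts by
diagonal translation on the first factor, the second by translation on `ℤ_q`,
and the `(i+2)`-nd by translation in the `i`-th coordinate of the last factor. -/
noncomputable def actZ (p q n : ℕ) [Fact p.Prime] [Fact q.Prime] (s : ℕ)
    (g : Fin (s + 2) → ℤ) (z : (ZMod n × ℤ_[p]) × ℤ_[q] × (Fin s → ℤ_[p])) :
    (ZMod n × ℤ_[p]) × ℤ_[q] × (Fin s → ℤ_[p]) :=
  ((z.1.1 + (g 0 : ZMod n), z.1.2 + (g 0 : ℤ_[p])),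
    z.2.1 + (g 1 : ℤ_[q]),
    fun i => z.2.2 i + (g i.succ.succ : ℤ_[p]))

/-- The analogous action of `ℤ^r` on `W = ℤ_p × (ZMod n × ℤ_q) × (Fin s → ℤ_p)`:
the first standard generator translates `ℤ_p` by `1`, the second acts by diagonal
translation on `ZMod n × ℤ_q`, and the `(i+2)`-nd by translation in the `i`-th
coordinate of the last factor. -/
noncomputable def actW (p q n : ℕ) [Fact p.Prime] [Fact q.Prime] (s : ℕ)
    (g : Fin (s + 2) → ℤ) (w : ℤ_[p] × (ZMod n × ℤ_[q]) × (Fin s → ℤ_[p])) :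
    ℤ_[p] × (ZMod n × ℤ_[q]) × (Fin s → ℤ_[p]) :=
  (w.1 + (g 0 : ℤ_[p]),
    (w.2.1.1 + (g 1 : ZMod n), w.2.1.2 + (g 1 : ℤ_[q])),
    fun i => w.2.2 i + (g i.succ.succ : ℤ_[p]))

theorem aux_isUnit (p n : ℕ) [Fact p.Prime] (h : Nat.Coprime p n) :
    ∃ v : ℤ_[p], (n : ℤ_[p]) * v = 1 := by
  have hu : IsUnit (n : ℤ_[p]) := by
    rw [PadicInt.isUnit_iff]
    by_contra hne
    have hlt : ‖((n : ℤ) : ℤ_[p])‖ < 1 := by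
      rw [Int.cast_natCast]
      exact lt_of_le_of_ne (PadicInt.norm_le_one _) hne
    rw [PadicInt.norm_int_lt_one_iff_dvd] at hlt
    have h2 : p ∣ n := by exact_mod_cast hlt
    exact (Nat.Prime.coprime_iff_not_dvd Fact.out).1 h h2
  obtain ⟨v, hv⟩ := hu.exists_right_inv
  exact ⟨v, hv⟩

theorem aux_div (n : ℕ) (hn : 1 < n) (k : ZMod n) (m : ℤ) :
    ∃ d : ℤ, m + (k.val : ℤ) - ((k + (m : ZMod n)).val : ℤ) = n * d := by
  have : NeZero n := ⟨by omega⟩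
  have : (n : ℤ) ∣ m + (k.val : ℤ) - ((k + (m : ZMod n)).val : ℤ) := by
    rw [← ZMod.intCast_zmod_eq_zero_iff_dvd]
    push_cast
    rw [ZMod.natCast_zmod_val, ZMod.natCast_zmod_val]
    ring
  exact this

/-- For `r = s + 2 ≥ 2`, distinct primes `p ≠ q` and `n > 1` coprime to both,
the systems `ℤ^r ↷ Z` and `ℤ^r ↷ W` are continuously orbit equivalent. -/
theorem actZ_coe_actW (p q n : ℕ) [Fact p.Prime] [Fact q.Prime] (hpq : p ≠ q)
    (hn : 1 < n) (hpn : Nat.Coprime p n) (hqn : Nat.Coprime q n) (s : ℕ) :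
    ∃ (φ : ((ZMod n × ℤ_[p]) × ℤ_[q] × (Fin s → ℤ_[p])) ≃ₜ
           (ℤ_[p] × (ZMod n × ℤ_[q]) × (Fin s → ℤ_[p])))
      (a : (Fin (s + 2) → ℤ) → (ZMod n × ℤ_[p]) × ℤ_[q] × (Fin s → ℤ_[p]) →
           (Fin (s + 2) → ℤ))
      (b : (Fin (s + 2) → ℤ) → ℤ_[p] × (ZMod n × ℤ_[q]) × (Fin s → ℤ_[p]) →
           (Fin (s + 2) → ℤ)),
      (∀ g, IsLocallyConstant (a g)) ∧
      (∀ h, IsLocallyConstant (b h)) ∧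
      (∀ g z, φ (actZ p q n s g z) = actW p q n s (a g z) (φ z)) ∧
      (∀ h w, φ.symm (actW p q n s h w) = actZ p q n s (b h w) (φ.symm w)) := by
  have : NeZero n := ⟨by omega⟩
  obtain ⟨u, hu⟩ := aux_isUnit p n hpn
  obtain ⟨v, hv⟩ := aux_isUnit q n hqn
  choose d hd using aux_div n hn
  have hdp : ∀ (k : ZMod n) (m : ℤ), (m : ℤ_[p]) + (k.val : ℤ_[p]) - ((k + (m : ZMod n)).val : ℤ_[p])
      = n * (d k m : ℤ_[p]) := fun k m => by exact_mod_cast congrArg (Int.cast : ℤ → ℤ_[p]) (hd k m)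
  have hdq : ∀ (k : ZMod n) (m : ℤ), (m : ℤ_[q]) + (k.val : ℤ_[q]) - ((k + (m : ZMod n)).val : ℤ_[q])
      = n * (d k m : ℤ_[q]) := fun k m => by exact_mod_cast congrArg (Int.cast : ℤ → ℤ_[q]) (hd k m)
  have cp : Continuous (fun k : ZMod n => (k.val : ℤ_[p])) := continuous_of_discreteTopology
  have cq : Continuous (fun k : ZMod n => (k.val : ℤ_[q])) := continuous_of_discreteTopology
  let φ : ((ZMod n × ℤ_[p]) × ℤ_[q] × (Fin s → ℤ_[p])) ≃ₜ
           (ℤ_[p] × (ZMod n × ℤ_[q]) × (Fin s → ℤ_[p])) :=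
    { toFun := fun z => ((z.1.2 - (z.1.1.val : ℤ_[p])) * u,
        (z.1.1, n * z.2.1 + (z.1.1.val : ℤ_[q])), z.2.2)
      invFun := fun w => ((w.2.1.1, n * w.1 + (w.2.1.1.val : ℤ_[p])),
        (w.2.1.2 - (w.2.1.1.val : ℤ_[q])) * v, w.2.2)
      left_inv := by
        rintro ⟨⟨k, x⟩, y, t⟩
        simp only [Prod.mk.injEq, true_and, and_true]
        constructor
        · linear_combination (x - (k.val : ℤ_[p])) * hu
        · linear_combination y * hv
      right_inv := by
        rintro ⟨x, ⟨k, y⟩, t⟩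
        simp only [Prod.mk.injEq, true_and, and_true]
        constructor
        · linear_combination x * hu
        · linear_combination (y - (k.val : ℤ_[q])) * hv
      continuous_toFun := by
        have h1 : Continuous (fun z : (ZMod n × ℤ_[p]) × ℤ_[q] × (Fin s → ℤ_[p]) =>
          (z.1.1.val : ℤ_[p])) := cp.comp (by fun_prop)
        have h2 : Continuous (fun z : (ZMod n × ℤ_[p]) × ℤ_[q] × (Fin s → ℤ_[p]) =>
          (z.1.1.val : ℤ_[q])) := cq.comp (by fun_prop)
        fun_prop
      continuous_invFun := by
        have h1 : Continuous (fun z : ℤ_[p] × (ZMod n × ℤ_[q]) × (Fin s → ℤ_[p]) =>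
          (z.2.1.1.val : ℤ_[p])) := cp.comp (by fun_prop)
        have h2 : Continuous (fun z : ℤ_[p] × (ZMod n × ℤ_[q]) × (Fin s → ℤ_[p]) =>
          (z.2.1.1.val : ℤ_[q])) := cq.comp (by fun_prop)
        fun_prop }
  let A : (Fin (s + 2) → ℤ) → ZMod n → (Fin (s + 2) → ℤ) := fun g k =>
    Fin.cons (d k (g 0)) (Fin.cons (n * g 1 + (g 0 - n * d k (g 0))) (fun i => g i.succ.succ))
  let B : (Fin (s + 2) → ℤ) → ZMod n → (Fin (s + 2) → ℤ) := fun g k =>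
    Fin.cons (n * g 0 + (g 1 - n * d k (g 1))) (Fin.cons (d k (g 1)) (fun i => g i.succ.succ))
  have A0 : ∀ g k, A g k 0 = d k (g 0) := fun _ _ => rfl
  have A1 : ∀ g k, A g k 1 = n * g 1 + (g 0 - n * d k (g 0)) := fun _ _ => rfl
  have A2 : ∀ g k i, A g k (Fin.succ (Fin.succ i)) = g i.succ.succ := fun _ _ _ => rfl
  have B0 : ∀ g k, B g k 0 = n * g 0 + (g 1 - n * d k (g 1)) := fun _ _ => rfl
  have B1 : ∀ g k, B g k 1 = d k (g 1) := fun _ _ => rfl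
  have B2 : ∀ g k i, B g k (Fin.succ (Fin.succ i)) = g i.succ.succ := fun _ _ _ => rfl
  refine ⟨φ, fun g z => A g z.1.1, fun g w => B g w.2.1.1, ?_, ?_, ?_, ?_⟩
  · intro g
    exact (IsLocallyConstant.of_discrete (A g)).comp_continuous
      (f := fun z : (ZMod n × ℤ_[p]) × ℤ_[q] × (Fin s → ℤ_[p]) => z.1.1) (by fun_prop)
  · intro g
    exact (IsLocallyConstant.of_discrete (B g)).comp_continuous
      (f := fun z : ℤ_[p] × (ZMod n × ℤ_[q]) × (Fin s → ℤ_[p]) => z.2.1.1) (by fun_prop)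
  · rintro g ⟨⟨k, x⟩, y, t⟩
    change (_, (_, _), _) = (_, (_, _), _)
    simp only [A0, A1, A2, actZ, Prod.mk.injEq]
    refine ⟨?_, ⟨?_, ?_⟩, rfl⟩
    · change (x + (g 0 : ℤ_[p]) - ((k + (g 0 : ZMod n)).val : ℤ_[p])) * u =
        (x - (k.val : ℤ_[p])) * u + _
      linear_combination u * hdp k (g 0) + (d k (g 0) : ℤ_[p]) * hu
    · change k + (g 0 : ZMod n) = k + _
      push_cast
      simp
    · change n * (y + (g 1 : ℤ_[q])) + ((k + (g 0 : ZMod n)).val : ℤ_[q]) =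
        n * y + (k.val : ℤ_[q]) + _
      push_cast
      linear_combination - hdq k (g 0)
  · rintro g ⟨x, ⟨k, y⟩, t⟩
    change ((_, _), _, _) = ((_, _), _, _)
    simp only [B0, B1, B2, actW, Prod.mk.injEq]
    refine ⟨⟨?_, ?_⟩, ?_, rfl⟩
    · change k + (g 1 : ZMod n) = k + _
      push_cast
      simp
    · change n * (x + (g 0 : ℤ_[p])) + ((k + (g 1 : ZMod n)).val : ℤ_[p]) =
        n * x + (k.val : ℤ_[p]) + _
      push_cast
      linear_combination - hdp k (g 1)
    · change (y + (g 1 : ℤ_[q]) - ((k + (g 1 : ZMod n)).val : ℤ_[q])) * v =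
        (y - (k.val : ℤ_[q])) * v + _
      linear_combination v * hdq k (g 1) + (d k (g 1) : ℤ_[q]) * hv
end

section
/- Let r ≥ 2, let p ≠ q be primes, and let n > 1 be an integer with gcd(p, n) = 1 = gcd(q, n). Let ℤ^r act on Z = (ZMod n × ℤ_p) × ℤ_q × (Fin (r−2) → ℤ_p) so that the first standard generator acts by diagonal translation (k, x) ↦ (k + 1, x + 1) on the first factor, the second standard generator acts by x ↦ x + 1 on the factor ℤ_q, and for each i the (i+2)-nd standard generator adds 1 in the i-th coordinate of the last factor; let ℤ^r act on W = ℤ_p × (ZMod n × ℤ_q) × (Fin (r−2) → ℤ_p) analogously, with the first generator translating ℤ_p by 1 and the second generator acting by diagonal translation on ZMod n × ℤ_q. Then ℤ^r ↷ Z and ℤ^r ↷ W are not conjugate: there is no homeomorphism φ : Z → W and group automorphism ρ of ℤ^r with φ(g.z) = ρ(g).φ(z) for all g ∈ ℤ^r and z ∈ Z. -/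
open Filter Topology in
theorem aux_padic (p q : ℕ) [Fact p.Prime] [Fact q.Prime] (hpq : p ≠ q) (a : ℤ) (w : ℤ_[p])
    (h : Tendsto (fun k : ℕ => w + (((q : ℤ) ^ k * a : ℤ) : ℤ_[p])) atTop (𝓝 w)) : a = 0 := by
  have h1 : Tendsto (fun k : ℕ => (((q : ℤ) ^ k * a : ℤ) : ℤ_[p])) atTop (𝓝 0) := by
    have := h.sub_const w
    simpa using this
  have h2 := h1.norm
  have hq : ‖(q : ℤ_[p])‖ = 1 := by
    have : IsUnit (q : ℤ_[p]) := by
      rw [PadicInt.isUnit_iff, PadicInt.norm_natCast_eq_one_iff]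
      exact (Nat.coprime_primes Fact.out Fact.out).2 hpq
    exact PadicInt.isUnit_iff.1 this
  have h3 : ∀ k : ℕ, ‖(((q : ℤ) ^ k * a : ℤ) : ℤ_[p])‖ = ‖(a : ℤ_[p])‖ := by
    intro k
    push_cast
    rw [norm_mul, norm_pow, hq, one_pow, one_mul]
  simp only [h3, norm_zero] at h2
  have h4 := tendsto_nhds_unique h2 tendsto_const_nhds
  rw [eq_comm, norm_eq_zero] at h4
  exact_mod_cast h4

open Filter Topology in
theorem aux_zmod (q n : ℕ) (hqn : Nat.Coprime q n) (a : ℤ) (w : ZMod n)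
    (h : Tendsto (fun k : ℕ => w + (((q : ℤ) ^ k * a : ℤ) : ZMod n)) atTop (𝓝 w)) :
    (n : ℤ) ∣ a := by
  rw [nhds_discrete, tendsto_pure] at h
  obtain ⟨k, hk⟩ := h.exists
  have hk' : (((q : ℤ) ^ k * a : ℤ) : ZMod n) = 0 := by simpa using hk
  replace hk' := (CharP.intCast_eq_zero_iff (ZMod n) n _).1 hk'
  have hc : IsCoprime (n : ℤ) ((q : ℤ) ^ k) :=
    (Nat.isCoprime_iff_coprime.2 hqn.symm).pow_right
  exact hc.dvd_of_dvd_mul_left hk'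

/-- For `r = s + 2 ≥ 2`, distinct primes `p ≠ q` and `n > 1` coprime to both,
the systems `ℤ^r ↷ Z` and `ℤ^r ↷ W` are not conjugate: there is no homeomorphism
`φ : Z → W` and group automorphism `ρ` of `ℤ^r` with `φ(g.z) = ρ(g).φ(z)`. -/
theorem actZ_not_conjugate_actW (p q n : ℕ) [Fact p.Prime] [Fact q.Prime]
    (hpq : p ≠ q) (hn : 1 < n) (hpn : Nat.Coprime p n) (hqn : Nat.Coprime q n)
    (s : ℕ) :
    ¬ ∃ (φ : ((ZMod n × ℤ_[p]) × ℤ_[q] × (Fin s → ℤ_[p])) ≃ₜ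
             (ℤ_[p] × (ZMod n × ℤ_[q]) × (Fin s → ℤ_[p])))
        (ρ : (Fin (s + 2) → ℤ) ≃+ (Fin (s + 2) → ℤ)),
        ∀ (g : Fin (s + 2) → ℤ) (z : (ZMod n × ℤ_[p]) × ℤ_[q] × (Fin s → ℤ_[p])),
          φ (actZ p q n s g z) = actW p q n s (ρ g) (φ z) := by
  rintro ⟨φ, ρ, h⟩
  let e : Fin (s + 2) → ℤ := Pi.single 1 1
  have he0 : e 0 = 0 := by simp [e]
  have he1 : e 1 = 1 := by simp [e]
  have hei : ∀ i : Fin s, e i.succ.succ = 0 := by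
    intro i
    have : i.succ.succ ≠ (1 : Fin (s + 2)) := by
      intro hh
      have := congrArg Fin.val hh
      simp at this
    simp [e, this]
  have hq : Filter.Tendsto (fun k : ℕ => ((q : ℤ_[q])) ^ k) Filter.atTop (nhds 0) := by
    apply tendsto_pow_atTop_nhds_zero_of_norm_lt_one
    rw [PadicInt.norm_p]
    exact inv_lt_one_of_one_lt₀ (by exact_mod_cast (Fact.out : q.Prime).one_lt)
  have h1 : Filter.Tendsto (fun k : ℕ => actZ p q n s (((q : ℤ) ^ k) • e) 0) Filter.atTop
      (nhds 0) := by
    have : (fun k : ℕ => actZ p q n s (((q : ℤ) ^ k) • e) 0)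
        = fun k : ℕ => ((0, 0), (q : ℤ_[q]) ^ k, 0) := by
      funext k
      ext <;> simp [actZ, he0, he1, hei]
    rw [this]
    exact tendsto_const_nhds.prodMk_nhds (hq.prodMk_nhds tendsto_const_nhds)
  have h2 := (φ.continuous.tendsto 0).comp h1
  have h3 : (φ ∘ fun k : ℕ => actZ p q n s (((q : ℤ) ^ k) • e) 0)
      = fun k : ℕ => actW p q n s (((q : ℤ) ^ k) • ρ e) (φ 0) := by
    funext k
    simp only [Function.comp, h, map_zsmul]
  rw [h3] at h2
  have c0 : ρ e 0 = 0 := aux_padic p q hpq _ (φ 0).1 ((continuous_fst.tendsto _).comp h2)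
  have c1 : (n : ℤ) ∣ ρ e 1 := aux_zmod q n hqn _ (φ 0).2.1.1
    (((continuous_fst.comp (continuous_fst.comp continuous_snd)).tendsto _).comp h2)
  have ci : ∀ i : Fin s, ρ e i.succ.succ = 0 := fun i =>
    aux_padic p q hpq _ ((φ 0).2.2 i)
      ((((continuous_apply i).comp (continuous_snd.comp continuous_snd)).tendsto _).comp h2)
  have hall : ∀ j, (n : ℤ) ∣ ρ e j := by
    intro j
    refine Fin.cases ?_ (fun j => Fin.cases ?_ (fun j => ?_) j) j
    · rw [c0]; exact dvd_zero _
    · exact c1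
    · rw [ci]; exact dvd_zero _
  choose g hg using hall
  have h4 : ρ e = (n : ℤ) • g := by
    funext j
    simp [hg j]
  have h5 : e = (n : ℤ) • ρ.symm g := by
    rw [← map_zsmul, ← h4, ρ.symm_apply_apply]
  have h6 := congrFun h5 1
  rw [he1] at h6
  have h7 : (n : ℤ) ∣ 1 := ⟨ρ.symm g 1, by simpa using h6⟩
  have h8 : n ∣ 1 := by exact_mod_cast h7
  have := Nat.le_of_dvd one_pos h8
  omega
end

section
/- Let G ↷ X and H ↷ Y be topologically free systems which are continuously orbit equivalent via (φ, a, b). Suppose there exist a locally constant map u : X → H and a group isomorphism ρ : G → H such that a(g, x) = u(g.x)·ρ(g)·u(x)⁻¹ for all g ∈ G and x ∈ X. Then the map ᵤφ : X → Y, x ↦ u(x)⁻¹.φ(x), is a homeomorphism satisfying ᵤφ(g.x) = ρ(g).ᵤφ(x) for all g ∈ G, x ∈ X; in particular, G ↷ X and H ↷ Y are conjugate. -/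
theorem continuous_smul_aux {K X Z : Type*} [Group K] [TopologicalSpace X] [TopologicalSpace Z]
    [MulAction K Z] [ContinuousConstSMul K Z] (v : X → K) (hv : IsLocallyConstant v)
    (f : X → Z) (hf : Continuous f) : Continuous (fun x => v x • f x) := by
  rw [continuous_iff_continuousAt]
  intro x
  have h1 : ContinuousAt (fun z => v x • f z) x := (hf.const_smul (v x)).continuousAt
  refine h1.congr ?_
  filter_upwards [hv.eventually_eq x] with z hz
  rw [hz]

/-- Suppose topologically free systems `G ↷ X` and `H ↷ Y` are continuously orbit
equivalent via `(φ, a, b)`, and the cocycle `a` is cohomologous to a group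
isomorphism `ρ : G ≃* H` via a locally constant `u : X → H`. Then
`x ↦ u(x)⁻¹ • φ(x)` is a homeomorphism intertwining the actions via `ρ`;
in particular the systems are conjugate. -/
theorem conjugate_of_cocycle_cohomologous_to_isomorphism
    (G : Type*) (X : Type*) (H : Type*) (Y : Type*)
    [Group G] [Group H]
    [TopologicalSpace X] [LocallyCompactSpace X] [T2Space X]
    [TopologicalSpace Y] [LocallyCompactSpace Y] [T2Space Y]
    [MulAction G X] [ContinuousConstSMul G X]
    [MulAction H Y] [ContinuousConstSMul H Y]
    (hX : TopologicallyFree G X) (hY : TopologicallyFree H Y)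
    (φ : X ≃ₜ Y) (a : G → X → H) (b : H → Y → G)
    (ha : ∀ g : G, IsLocallyConstant (a g))
    (hb : ∀ h : H, IsLocallyConstant (b h))
    (hφ : ∀ (g : G) (x : X), φ (g • x) = a g x • φ x)
    (hψ : ∀ (h : H) (y : Y), φ.symm (h • y) = b h y • φ.symm y)
    (u : X → H) (hu : IsLocallyConstant u) (ρ : G ≃* H)
    (hco : ∀ (g : G) (x : X), a g x = u (g • x) * ρ g * (u x)⁻¹) :
    ∃ φ' : X ≃ₜ Y,
      (∀ x : X, φ' x = (u x)⁻¹ • φ x) ∧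
      (∀ (g : G) (x : X), φ' (g • x) = ρ g • φ' x) := by
  have key : ∀ (h : H) (x : X), a (b h (φ x)) x = h := by
    intro h x
    by_contra hne
    have hd := hY (h⁻¹ * a (b h (φ x)) x) (by
      intro h0
      exact hne (inv_mul_eq_one.mp h0).symm)
    have e1 : ∀ᶠ y in nhds (φ x), b h y = b h (φ x) := (hb h).eventually_eq (φ x)
    have e2 : ∀ᶠ y in nhds (φ x), a (b h (φ x)) (φ.symm y) = a (b h (φ x)) x := by
      have := ((ha (b h (φ x))).comp_continuous φ.symm.continuous).eventually_eq (φ x)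
      simpa using this
    obtain ⟨y, hy, hy1, hy2⟩ := ((mem_closure_iff_frequently.mp (hd (φ x))).and_eventually
      (e1.and e2)).exists
    apply hy
    have h3 := hφ (b h y) (φ.symm y)
    rw [← hψ, φ.apply_symm_apply, φ.apply_symm_apply, hy1, hy2] at h3
    rw [mul_smul, ← h3, inv_smul_smul]
  have equi : ∀ (g : G) (x : X), (u (g • x))⁻¹ • φ (g • x) = ρ g • (u x)⁻¹ • φ x := by
    intro g x
    rw [hφ, hco, smul_smul, smul_smul]
    congr 1
    group
  have inj : ∀ x x' : X, (u x)⁻¹ • φ x = (u x')⁻¹ • φ x' → x = x' := by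
    intro x x' h
    have h1 : φ x' = (u x' * (u x)⁻¹) • φ x := by
      rw [mul_smul, h, smul_inv_smul]
    have h2 : x' = b (u x' * (u x)⁻¹) (φ x) • x := by
      have := hψ (u x' * (u x)⁻¹) (φ x)
      rwa [← h1, φ.symm_apply_apply, φ.symm_apply_apply] at this
    have h3 := key (u x' * (u x)⁻¹) x
    rw [hco, ← h2] at h3
    have h4 : ρ (b (u x' * (u x)⁻¹) (φ x)) = 1 := by
      have := mul_right_cancel h3
      simpa using this
    have h5 := (map_eq_one_iff ρ ρ.injective).mp h4
    rw [h5, one_smul] at h2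
    exact h2.symm
  have right : ∀ y : Y, (u (ρ.symm (u (φ.symm y)) • φ.symm y))⁻¹ •
      φ (ρ.symm (u (φ.symm y)) • φ.symm y) = y := by
    intro y
    rw [equi, ρ.apply_symm_apply, smul_inv_smul, φ.apply_symm_apply]
  refine ⟨{ toFun := fun x => (u x)⁻¹ • φ x
            invFun := fun y => ρ.symm (u (φ.symm y)) • φ.symm y
            left_inv := fun x => inj _ _ (right _)
            right_inv := right
            continuous_toFun := continuous_smul_aux _ (hu.comp (fun k => k⁻¹)) _ φ.continuous
            continuous_invFun := continuous_smul_aux _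
              ((hu.comp ρ.symm).comp_continuous φ.symm.continuous) _ φ.symm.continuous },
    fun x => rfl, equi⟩
end

section
/- Let G be a countable torsion-free group satisfying the Følner condition. Let G ↷ X and H ↷ Y be topologically free systems on nonempty compact Hausdorff spaces X and Y which are continuously orbit equivalent via (φ, a, b). If there exist a locally constant map u : X → H and a group homomorphism ρ : G → H such that a(g, x) = u(g.x)·ρ(g)·u(x)⁻¹ for all g ∈ G and x ∈ X, then ρ is a group isomorphism. -/
open scoped Classical in
/-- A group `G` satisfies the *Følner condition* if for every finite `S ⊆ G` and
`ε > 0` there is a nonempty finite `F ⊆ G` with `|sF △ F| < ε·|F|` for all `s ∈ S`. -/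
def FolnerCondition (G : Type*) [Group G] : Prop :=
  ∀ (S : Finset G) (ε : ℝ), 0 < ε → ∃ F : Finset G, F.Nonempty ∧
    ∀ s ∈ S,
      (((F.image (fun x => s * x) \ F) ∪ (F \ F.image (fun x => s * x))).card : ℝ) <
        ε * (F.card : ℝ)

open scoped Classical in
theorem folner_not_paradoxical (G : Type*) [Group G] (hamen : FolnerCondition G)
    (S : Finset G) (p q : G → G) (hp : Function.Injective p) (hq : Function.Injective q)
    (hpq : ∀ x y, p x ≠ q y) (hpS : ∀ x, p x * x⁻¹ ∈ S) (hqS : ∀ x, q x * x⁻¹ ∈ S) : False := by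
  obtain ⟨F, hF, h⟩ := hamen S (1 / ((S.card : ℝ) + 1)) (by positivity)
  have hFpos : (0 : ℝ) < F.card := by exact_mod_cast hF.card_pos
  have hsub : F.image p ∪ F.image q ⊆ F ∪ S.biUnion (fun s => F.image (fun x => s * x) \ F) := by
    intro z hz
    by_cases hzF : z ∈ F
    · exact Finset.mem_union_left _ hzF
    · refine Finset.mem_union_right _ (Finset.mem_biUnion.2 ?_)
      rcases Finset.mem_union.1 hz with hz | hz
      · obtain ⟨x, hx, rfl⟩ := Finset.mem_image.1 hz
        exact ⟨_, hpS x, Finset.mem_sdiff.2 ⟨Finset.mem_image.2 ⟨x, hx, by simp⟩, hzF⟩⟩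
      · obtain ⟨x, hx, rfl⟩ := Finset.mem_image.1 hz
        exact ⟨_, hqS x, Finset.mem_sdiff.2 ⟨Finset.mem_image.2 ⟨x, hx, by simp⟩, hzF⟩⟩
  have hdisj : Disjoint (F.image p) (F.image q) := by
    rw [Finset.disjoint_left]
    intro z hz hz'
    obtain ⟨x, _, rfl⟩ := Finset.mem_image.1 hz
    obtain ⟨y, _, hy⟩ := Finset.mem_image.1 hz'
    exact hpq x y hy.symm
  have h1 := (Finset.card_le_card hsub).trans (Finset.card_union_le _ _)
  rw [Finset.card_union_of_disjoint hdisj, Finset.card_image_of_injective _ hp,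
    Finset.card_image_of_injective _ hq] at h1
  have h2 : ((S.biUnion (fun s => F.image (fun x => s * x) \ F)).card : ℝ)
      ≤ S.card * (1 / ((S.card : ℝ) + 1) * F.card) := by
    have h3 : ((S.biUnion (fun s => F.image (fun x => s * x) \ F)).card : ℝ)
        ≤ ∑ s ∈ S, ((F.image (fun x => s * x) \ F).card : ℝ) := by
      exact_mod_cast Finset.card_biUnion_le
    refine h3.trans ?_
    rw [← nsmul_eq_mul]
    refine Finset.sum_le_card_nsmul _ _ _ fun s hs => ?_
    refine le_trans ?_ (h s hs).le
    exact_mod_cast Finset.card_le_card Finset.subset_union_left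
  have h4 : (S.card : ℝ) * (1 / ((S.card : ℝ) + 1) * F.card) < F.card := by
    have : (S.card : ℝ) * (1 / ((S.card : ℝ) + 1) * F.card)
        = F.card - F.card / ((S.card : ℝ) + 1) := by
      field_simp
      ring
    rw [this]
    have : 0 < (F.card : ℝ) / ((S.card : ℝ) + 1) := by positivity
    linarith
  have h5 : (F.card : ℝ) + F.card ≤ F.card
      + (S.biUnion (fun s => F.image (fun x => s * x) \ F)).card := by exact_mod_cast h1
  linarith

/-- Let `G` be a countable torsion-free group satisfying the Følner condition, and let
`G ↷ X`, `H ↷ Y` be topologically free systems on nonempty compact Hausdorff spaces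
which are continuously orbit equivalent via `(φ, a, b)`. If the cocycle `a` is
cohomologous, via a locally constant `u : X → H`, to a group homomorphism
`ρ : G →* H`, then `ρ` is an isomorphism. -/
theorem cocycle_cohomologous_hom_is_isomorphism
    (G : Type*) (X : Type*) (H : Type*) (Y : Type*)
    [Group G] [Countable G] [Group H]
    (htf : ∀ g : G, g ≠ 1 → ¬IsOfFinOrder g)
    (hamen : FolnerCondition G)
    [TopologicalSpace X] [CompactSpace X] [T2Space X] [Nonempty X]
    [TopologicalSpace Y] [CompactSpace Y] [T2Space Y] [Nonempty Y]
    [MulAction G X] [ContinuousConstSMul G X]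
    [MulAction H Y] [ContinuousConstSMul H Y]
    (hX : TopologicallyFree G X) (hY : TopologicallyFree H Y)
    (φ : X ≃ₜ Y) (a : G → X → H) (b : H → Y → G)
    (ha : ∀ g : G, IsLocallyConstant (a g))
    (hb : ∀ h : H, IsLocallyConstant (b h))
    (hφ : ∀ (g : G) (x : X), φ (g • x) = a g x • φ x)
    (hψ : ∀ (h : H) (y : Y), φ.symm (h • y) = b h y • φ.symm y)
    (u : X → H) (hu : IsLocallyConstant u) (ρ : G →* H)
    (hco : ∀ (g : G) (x : X), a g x = u (g • x) * ρ g * (u x)⁻¹) :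
    Function.Bijective ρ := by
  have hfin : (Set.range u).Finite := hu.range_finite
  have hinj : Function.Injective ρ := by
    rw [injective_iff_map_eq_one]
    intro g hg
    by_contra hne
    have hpow : ∀ n : ℕ, g ^ (n + 1) ≠ 1 := fun n hn =>
      htf g hne (isOfFinOrder_iff_pow_eq_one.2 ⟨n + 1, n.succ_pos, hn⟩)
    have hd : Dense (⋂ n : ℕ, {x : X | g ^ (n + 1) • x ≠ x}) := by
      refine dense_iInter_of_isOpen (fun n => ?_) (fun n => hX _ (hpow n))
      exact isOpen_ne_fun (continuous_const_smul _) continuous_id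
    obtain ⟨x, hx⟩ := hd.nonempty
    have hx' : ∀ n : ℕ, g ^ (n + 1) • x ≠ x := fun n => Set.mem_iInter.1 hx n
    have hlt : ∀ m n : ℕ, m < n → g ^ m • x ≠ g ^ n • x := by
      intro m n hmn h
      obtain ⟨k, rfl⟩ := Nat.exists_eq_add_of_lt hmn
      rw [add_assoc, pow_add, mul_smul] at h
      exact hx' k (smul_left_cancel _ h).symm
    have hi : Function.Injective (fun n : ℕ => φ (g ^ n • x)) := by
      intro m n h
      have h' := φ.injective h
      rcases lt_trichotomy m n with hc | hc | hc
      · exact absurd h' (hlt m n hc)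
      · exact hc
      · exact absurd h'.symm (hlt n m hc)
    refine Set.infinite_range_of_injective hi
      ((hfin.image (fun t => (t * (u x)⁻¹) • φ x)).subset ?_)
    rintro _ ⟨n, rfl⟩
    refine ⟨u (g ^ n • x), ⟨_, rfl⟩, ?_⟩
    simp [hφ, hco, hg]
  have hab : ∀ (h : H) (x : X), a (b h (φ x)) x = h := by
    intro h x
    by_contra hne
    have hne' : h⁻¹ * a (b h (φ x)) x ≠ 1 := fun hc => hne (inv_mul_eq_one.1 hc).symm
    have ho : IsOpen ({y : Y | b h y = b h (φ x)} ∩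
        φ.symm ⁻¹' {x' | a (b h (φ x)) x' = a (b h (φ x)) x}) :=
      ((hb h).isOpen_fiber _).inter (((ha _).isOpen_fiber _).preimage φ.symm.continuous)
    obtain ⟨y, ⟨hy1, hy2⟩, hy3⟩ := (hY _ hne').inter_open_nonempty _ ho ⟨φ x, rfl, by simp⟩
    apply hy3
    have e1 := hφ (b h (φ x)) (φ.symm y)
    have hy2' : a (b h (φ x)) (φ.symm y) = a (b h (φ x)) x := hy2
    have hy1' : b h y = b h (φ x) := hy1
    rw [hy2', ← hy1', ← hψ] at e1
    simp only [Homeomorph.apply_symm_apply] at e1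
    rw [mul_smul, ← hy1', ← e1, inv_smul_smul]
  refine ⟨hinj, fun h => ?_⟩
  by_contra hh
  push Not at hh
  obtain ⟨x⟩ := ‹Nonempty X›
  have hsurj : ∀ k : H, ∃ g : G, u (g • x) * ρ g = k := fun k =>
    ⟨b (k * (u x)⁻¹) (φ x), by
      have := hab (k * (u x)⁻¹) x
      rw [hco] at this
      exact mul_right_cancel this⟩
  choose p hp using fun g : G => hsurj (ρ g)
  choose q hq using fun g : G => hsurj (h * ρ g)
  have hS : (ρ ⁻¹' ((fun t => t⁻¹) '' Set.range u ∪ (fun t => t⁻¹ * h) '' Set.range u)).Finite :=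
    ((hfin.image _).union (hfin.image _)).preimage hinj.injOn
  refine folner_not_paradoxical G hamen hS.toFinset p q ?_ ?_ ?_ ?_ ?_
  · intro g g' e
    apply hinj
    rw [← hp g, ← hp g', e]
  · intro g g' e
    apply hinj
    apply mul_left_cancel (a := h)
    rw [← hq g, ← hq g', e]
  · intro g g' e
    apply hh (g * g'⁻¹)
    rw [map_mul, map_inv, mul_inv_eq_iff_eq_mul, ← hp g, ← hq g', e]
  · intro g
    rw [Set.Finite.mem_toFinset]
    refine Or.inl ⟨u (p g • x), ⟨_, rfl⟩, ?_⟩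
    simp only [map_mul, map_inv]
    rw [eq_mul_inv_iff_mul_eq, inv_mul_eq_iff_eq_mul, hp]
  · intro g
    rw [Set.Finite.mem_toFinset]
    refine Or.inr ⟨u (q g • x), ⟨_, rfl⟩, ?_⟩
    simp only [map_mul, map_inv]
    rw [eq_mul_inv_iff_mul_eq, mul_assoc, inv_mul_eq_iff_eq_mul, hq]
end

section
/- Let G be a countable torsion-free group satisfying the Følner condition. Let G ↷ X and H ↷ Y be topologically free systems on nonempty compact Hausdorff spaces X and Y, and assume that G ↷ X is continuous H-cocycle rigid. If G ↷ X and H ↷ Y are continuously orbit equivalent, then they are conjugate. -/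
/-- `G ↷ X` is *continuous `H`-cocycle rigid* if every continuous `H`-cocycle
(i.e. every map `a : G × X → H`, locally constant in `x`, satisfying the cocycle
identity) is continuously cohomologous to a group homomorphism `G →* H`. -/
def CocycleRigid (G : Type*) (X : Type*) (H : Type*) [Group G] [Group H]
    [TopologicalSpace X] [MulAction G X] : Prop :=
  ∀ a : G → X → H, (∀ g : G, IsLocallyConstant (a g)) →
    (∀ (g₁ g₂ : G) (x : X), a (g₁ * g₂) x = a g₁ (g₂ • x) * a g₂ x) →
    ∃ (ρ : G →* H) (u : X → H), IsLocallyConstant u ∧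
      ∀ (g : G) (x : X), a g x = u (g • x) * ρ g * (u x)⁻¹

/-- Two systems are *continuously orbit equivalent* if there are a homeomorphism
`φ` and maps `a`, `b`, locally constant in the space variable, intertwining the
orbits as in the definition of continuous orbit equivalence. -/
def ContOrbitEquiv (G : Type*) (X : Type*) (H : Type*) (Y : Type*)
    [Group G] [Group H] [TopologicalSpace X] [TopologicalSpace Y]
    [MulAction G X] [MulAction H Y] : Prop :=
  ∃ (φ : X ≃ₜ Y) (a : G → X → H) (b : H → Y → G),
    (∀ g : G, IsLocallyConstant (a g)) ∧
    (∀ h : H, IsLocallyConstant (b h)) ∧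
    (∀ (g : G) (x : X), φ (g • x) = a g x • φ x) ∧
    (∀ (h : H) (y : Y), φ.symm (h • y) = b h y • φ.symm y)

/-- Two systems are *conjugate* if there are a homeomorphism and a group isomorphism
intertwining the actions. -/
def Conjugate (G : Type*) (X : Type*) (H : Type*) (Y : Type*)
    [Group G] [Group H] [TopologicalSpace X] [TopologicalSpace Y]
    [MulAction G X] [MulAction H Y] : Prop :=
  ∃ (φ : X ≃ₜ Y) (ρ : G ≃* H), ∀ (g : G) (x : X), φ (g • x) = ρ g • φ x

theorem aux_eq_of_smul_eq {H Y : Type*} [Group H] [TopologicalSpace Y] [MulAction H Y]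
    (hY : TopologicallyFree H Y) (f g : Y → H) (hf : IsLocallyConstant f)
    (hg : IsLocallyConstant g) (h : ∀ y, f y • y = g y • y) (y : Y) : f y = g y := by
  by_contra hne
  have hne' : (g y)⁻¹ * f y ≠ 1 := fun h' => hne (by rw [inv_mul_eq_one] at h'; exact h'.symm)
  have hd := hY _ hne'
  have hev := ((IsLocallyConstant.iff_eventually_eq f).1 hf y).and
    ((IsLocallyConstant.iff_eventually_eq g).1 hg y)
  obtain ⟨z, hz1, hz2, hz3⟩ := hd.inter_nhds_nonempty hev
  apply hz1
  rw [mul_smul, ← hz2, h z, hz3, inv_smul_smul]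

theorem aux_comp {A B X : Type*} [TopologicalSpace X] (f : X → A) (k : A → X → B)
    (hf : IsLocallyConstant f) (hk : ∀ a, IsLocallyConstant (k a)) :
    IsLocallyConstant (fun x => k (f x) x) := by
  rw [IsLocallyConstant.iff_eventually_eq]
  intro x
  filter_upwards [(IsLocallyConstant.iff_eventually_eq f).1 hf x,
    (IsLocallyConstant.iff_eventually_eq _).1 (hk (f x)) x] with z h1 h2
  rw [h1, h2]

theorem aux_surj {G H : Type*} [Group G] [Group H] (hamen : FolnerCondition G)
    (ρ : G →* H) (hρ : Function.Injective ρ) (U : Set H) (hU : U.Finite) (w : G → H)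
    (hw : ∀ g, w g ∈ U) (hs : ∀ h, ∃ g, w g * ρ g = h) : Function.Surjective ρ := by
  classical
  intro h
  by_contra hh
  have hS : {s : G | ρ s ∈ (fun v => v⁻¹) '' U ∪ (fun v => v⁻¹ * h) '' U}.Finite :=
    ((hU.image _).union (hU.image _)).preimage hρ.injOn
  set S := hS.toFinset with hSdef
  obtain ⟨F, hF, hFS⟩ := hamen S (1 / (S.card + 1)) (by positivity)
  set T : Finset G := F ∪ S.biUnion (fun s => F.image (fun x => s * x) \ F) with hT
  have key : F.image ρ ∪ F.image (fun f => h * ρ f) ⊆ T.image (fun g => w g * ρ g) := by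
    have hmem : ∀ s ∈ S, ∀ f ∈ F, s * f ∈ T := by
      intro s hs f hf
      by_cases hm : s * f ∈ F
      · exact Finset.mem_union_left _ hm
      · refine Finset.mem_union_right _ (Finset.mem_biUnion.2 ⟨s, hs, ?_⟩)
        exact Finset.mem_sdiff.2 ⟨Finset.mem_image_of_mem _ hf, hm⟩
    intro k hk
    obtain ⟨g, hg⟩ := hs k
    refine Finset.mem_image.2 ⟨g, ?_, hg⟩
    rcases Finset.mem_union.1 hk with hk | hk
    · obtain ⟨f, hf, rfl⟩ := Finset.mem_image.1 hk
      have : g * f⁻¹ ∈ S := by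
        rw [hSdef, Set.Finite.mem_toFinset]
        refine Or.inl ⟨w g, hw g, ?_⟩
        simp only [map_mul, map_inv, ← hg]
        group
      simpa using hmem _ this f hf
    · obtain ⟨f, hf, rfl⟩ := Finset.mem_image.1 hk
      have : g * f⁻¹ ∈ S := by
        rw [hSdef, Set.Finite.mem_toFinset]
        refine Or.inr ⟨w g, hw g, ?_⟩
        have : h = w g * ρ g * (ρ f)⁻¹ := by rw [hg]; group
        simp only [map_mul, map_inv]
        rw [this]
        group
      simpa using hmem _ this f hf
  have hdisj : Disjoint (F.image ρ) (F.image (fun f => h * ρ f)) := by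
    rw [Finset.disjoint_left]
    intro k h1 h2
    obtain ⟨f, hf, rfl⟩ := Finset.mem_image.1 h1
    obtain ⟨f', hf', h3⟩ := Finset.mem_image.1 h2
    exact hh ⟨f * f'⁻¹, by rw [map_mul, map_inv, ← h3]; group⟩
  have hc1 : 2 * F.card ≤ T.card := by
    have := (Finset.card_le_card key).trans Finset.card_image_le
    rw [Finset.card_union_of_disjoint hdisj, Finset.card_image_of_injective _ hρ,
      Finset.card_image_of_injective _ (fun x y hxy => hρ (mul_left_cancel hxy))] at this
    omega
  have hc2 : (T.card : ℝ) ≤ F.card + S.card * (1 / (S.card + 1) * F.card) := by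
    have h1 : T.card ≤ F.card + ∑ s ∈ S, (F.image (fun x => s * x) \ F).card :=
      (Finset.card_union_le _ _).trans (Nat.add_le_add_left Finset.card_biUnion_le _)
    have h2 : (∑ s ∈ S, ((F.image (fun x => s * x) \ F).card : ℝ))
        ≤ ∑ s ∈ S, (1 / (S.card + 1) * F.card : ℝ) := by
      refine Finset.sum_le_sum fun s hs => ?_
      refine le_trans ?_ (hFS s hs).le
      have := Finset.card_le_card (Finset.subset_union_left
        (s₁ := F.image (fun x => s * x) \ F) (s₂ := F \ F.image (fun x => s * x)))
      convert (Nat.cast_le (α := ℝ)).2 this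
    rw [Finset.sum_const, nsmul_eq_mul] at h2
    have h1' : (T.card : ℝ) ≤ F.card + ∑ s ∈ S, ((F.image (fun x => s * x) \ F).card : ℝ) := by
      exact_mod_cast h1
    linarith
  have hF0 : (0 : ℝ) < F.card := by exact_mod_cast hF.card_pos
  have hc1' : (2 : ℝ) * F.card ≤ T.card := by exact_mod_cast hc1
  have hlt : (S.card : ℝ) * (1 / (S.card + 1) * F.card) < F.card := by
    have : (S.card : ℝ) * (1 / (S.card + 1)) < 1 := by
      rw [mul_one_div, div_lt_one (by positivity)]; linarith
    nlinarith
  linarith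


/-- Let `G` be a countable torsion-free group satisfying the Følner condition, and let
`G ↷ X` and `H ↷ Y` be topologically free systems on nonempty compact Hausdorff
spaces. If `G ↷ X` is continuous `H`-cocycle rigid, then continuous orbit equivalence
of the two systems implies conjugacy. -/
theorem conjugate_of_coe_of_cocycleRigid
    (G : Type*) (X : Type*) (H : Type*) (Y : Type*)
    [Group G] [Countable G] [Group H]
    (htf : ∀ g : G, g ≠ 1 → ¬IsOfFinOrder g)
    (hamen : FolnerCondition G)
    [TopologicalSpace X] [CompactSpace X] [T2Space X] [Nonempty X]
    [TopologicalSpace Y] [CompactSpace Y] [T2Space Y] [Nonempty Y]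
    [MulAction G X] [ContinuousConstSMul G X]
    [MulAction H Y] [ContinuousConstSMul H Y]
    (hX : TopologicallyFree G X) (hY : TopologicallyFree H Y)
    (hrig : CocycleRigid G X H)
    (hcoe : ContOrbitEquiv G X H Y) :
    Conjugate G X H Y := by
  obtain ⟨φ, a, b, ha, hb, hφ, hψ⟩ := hcoe
  have hcoc : ∀ (g₁ g₂ : G) (x : X), a (g₁ * g₂) x = a g₁ (g₂ • x) * a g₂ x := by
    intro g₁ g₂ x
    have := aux_eq_of_smul_eq hY (fun y => a (g₁ * g₂) (φ.symm y))
      (fun y => a g₁ (g₂ • φ.symm y) * a g₂ (φ.symm y))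
      ((ha _).comp_continuous φ.symm.continuous)
      (((ha _).comp_continuous (φ.symm.continuous.const_smul g₂)).mul
        ((ha _).comp_continuous φ.symm.continuous))
      (fun y => by
        have h1 := hφ (g₁ * g₂) (φ.symm y)
        rw [mul_smul, hφ, hφ, φ.apply_symm_apply] at h1
        rw [mul_smul, h1]) (φ x)
    simpa using this
  have hba : ∀ (g : G) (x : X), b (a g x) (φ x) = g := by
    intro g x
    exact aux_eq_of_smul_eq hX (fun x => b (a g x) (φ x)) (fun _ => g)
      (aux_comp (a g) (fun h x => b h (φ x)) (ha g)
        (fun h => (hb h).comp_continuous φ.continuous))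
      (IsLocallyConstant.const g)
      (fun x => by
        have := hψ (a g x) (φ x)
        rw [← hφ, φ.symm_apply_apply, φ.symm_apply_apply] at this
        exact this.symm) x
  have hab : ∀ (h : H) (x : X), a (b h (φ x)) x = h := by
    intro h x
    have := aux_eq_of_smul_eq hY (fun y => a (b h y) (φ.symm y)) (fun _ => h)
      (aux_comp (b h) (fun g y => a g (φ.symm y)) (hb h)
        (fun g => (ha g).comp_continuous φ.symm.continuous))
      (IsLocallyConstant.const h)
      (fun y => by
        have := hφ (b h y) (φ.symm y)
        rw [← hψ, φ.apply_symm_apply, φ.apply_symm_apply] at this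
        exact this.symm) (φ x)
    simpa using this
  obtain ⟨ρ, u, hu, hau⟩ := hrig a ha hcoc
  have hUfin : (Set.range u).Finite := hu.range_finite
  obtain ⟨x₀⟩ := ‹Nonempty X›
  have hinj : Function.Injective ρ := by
    rw [injective_iff_map_eq_one]
    intro g hg
    by_contra hne
    have hpow := injective_pow_iff_not_isOfFinOrder.2 (htf g hne)
    have : Function.Injective (fun n : ℕ => u (g ^ n • x₀)) := by
      intro n m hnm
      apply hpow
      have h1 : a (g ^ n) x₀ = a (g ^ m) x₀ := by
        rw [hau, hau, map_pow, map_pow, hg, one_pow, one_pow]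
        simp only at hnm
        rw [hnm]
      simp only
      rw [← hba (g ^ n) x₀, h1, hba]
    exact Set.infinite_of_injective_forall_mem this (fun n => Set.mem_range_self _) hUfin
  have hsurj : Function.Surjective ρ := by
    refine aux_surj hamen ρ hinj _ hUfin (fun g => u (g • x₀)) (fun g => Set.mem_range_self _) ?_
    intro h
    refine ⟨b (h * (u x₀)⁻¹) (φ x₀), ?_⟩
    have := hau (b (h * (u x₀)⁻¹) (φ x₀)) x₀
    rw [hab] at this
    exact (mul_right_cancel this).symm
  set f : X → Y := fun x => (u x)⁻¹ • φ x with hf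
  have hequiv : ∀ (g : G) (x : X), f (g • x) = ρ g • f x := by
    intro g x
    simp only [hf, hφ, hau, smul_smul]
    congr 1
    group
  have hcont : Continuous f := by
    rw [continuous_iff_continuousAt]
    intro x
    have h1 : ContinuousAt (fun z => (u x)⁻¹ • φ z) x :=
      (φ.continuous.const_smul _).continuousAt
    refine h1.congr ?_
    filter_upwards [(IsLocallyConstant.iff_eventually_eq u).1 hu x] with z hz
    simp only [hf, hz]
  have hfinj : Function.Injective f := by
    intro x x' hxx
    have h1 : φ x' = (u x' * (u x)⁻¹) • φ x := by
      rw [mul_smul]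
      simp only [hf] at hxx
      rw [hxx, smul_inv_smul]
    set g := b (u x' * (u x)⁻¹) (φ x) with hg
    have h2 : x' = g • x := by
      have := hψ (u x' * (u x)⁻¹) (φ x)
      rwa [← h1, φ.symm_apply_apply, φ.symm_apply_apply] at this
    have h3 := hau g x
    rw [← h2, hg, hab, ← hg] at h3
    have h4 : ρ g = 1 := by
      have := mul_right_cancel h3
      exact mul_eq_left.1 this.symm
    have h5 : g = 1 := hinj (by rw [h4, map_one])
    rw [h2, h5, one_smul]
  have hfsurj : Function.Surjective f := by
    intro y
    obtain ⟨g, hg⟩ := hsurj (u (φ.symm y))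
    exact ⟨g • φ.symm y, by rw [hequiv, hg]; simp [hf]⟩
  exact ⟨Continuous.homeoOfEquivCompactToT2 (f := Equiv.ofBijective f ⟨hfinj, hfsurj⟩) hcont,
    MulEquiv.ofBijective ρ ⟨hinj, hsurj⟩, hequiv⟩
end

section
/- Let G be a countable torsion-free group and X₀ a nonempty compact Hausdorff space, and suppose the Bernoulli shift G ↷ X₀^G, (g.x)_γ = x_{g⁻¹γ}, is topologically free. Let H be a finitely generated nilpotent group which is not virtually infinite cyclic (i.e., H has no infinite cyclic subgroup of finite index), and let H ↷ Y be a topologically free system. If G ↷ X₀^G and H ↷ Y are continuously orbit equivalent, then they are conjugate. -/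
/-- The Bernoulli shift action of `G` on `G → X₀`: `(g • x) γ = x (g⁻¹ * γ)`. -/
instance bernoulliShift (G : Type*) [Group G] (X₀ : Type*) :
    MulAction G (G → X₀) where
  smul g x := fun γ => x (g⁻¹ * γ)
  one_smul x := by funext γ; show x _ = x γ; rw [inv_one, one_mul]
  mul_smul g₁ g₂ x := by
    funext γ; show x _ = x _; rw [mul_inv_rev, mul_assoc]

lemma bernoulliShift_smul_def (G : Type*) [Group G] (X₀ : Type*) (g : G)
    (x : G → X₀) : g • x = fun γ => x (g⁻¹ * γ) := rfl

/-- The Bernoulli shift acts by homeomorphisms (continuously) on the product space. -/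
instance (G : Type*) [Group G] (X₀ : Type*) [TopologicalSpace X₀] :
    ContinuousConstSMul G (G → X₀) :=
  ⟨fun g => continuous_pi fun γ => continuous_apply (g⁻¹ * γ)⟩

open Filter in
lemma end_aux {G H : Type*} [Group G] (S : Set G) (hS : Subgroup.closure S = ⊤)
    (w : G) (hw : ∀ g, w * g = g * w) (F : Set G)
    (hev : ∀ g : G, ∀ᶠ n : ℕ in atTop, w ^ n * g ∉ F)
    (f : G → H) (hf : ∀ s ∈ S, ∀ g, g ∉ F → f (s * g) = f g)
    (g₁ : G) (K : H) (h₁ : ∀ n : ℕ, f (w ^ n * g₁) = K) (g : G) :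
    ∀ᶠ n : ℕ in atTop, f (w ^ n * g) = K := by
  have hwn : ∀ (n : ℕ) (g : G), w ^ n * g = g * w ^ n := fun n g =>
    (Commute.pow_left (show Commute w g from hw g) n).eq
  have key : ∀ h : G, ∀ g, (∀ᶠ n : ℕ in atTop, f (w ^ n * g) = K) ↔
      (∀ᶠ n : ℕ in atTop, f (w ^ n * (h * g)) = K) := by
    intro h
    have hh : h ∈ Subgroup.closure S := by rw [hS]; trivial
    induction hh using Subgroup.closure_induction with
    | mem s hs =>
      intro g
      have : ∀ᶠ n : ℕ in atTop, f (w ^ n * (s * g)) = f (w ^ n * g) := by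
        filter_upwards [hev g] with n hn
        rw [← hf s hs _ hn, ← mul_assoc, hwn n s, mul_assoc]
      constructor
      · intro h
        filter_upwards [h, this] with n h1 h2
        rw [h2, h1]
      · intro h
        filter_upwards [h, this] with n h1 h2
        rw [← h2, h1]
    | one => intro g; simp
    | mul x y _ _ hx hy => intro g; rw [hy g, hx (y * g), mul_assoc]
    | inv x _ hx => intro g; rw [hx (x⁻¹ * g), mul_inv_cancel_left]
  have := (key (g * g₁⁻¹) g₁).1 (Eventually.of_forall h₁)
  simpa using this

open Filter in
lemma one_end {G H : Type*} [Group G] (S : Set G) (hS : Subgroup.closure S = ⊤)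
    (z : G) (hzS : z ∈ S) (hz : ∀ g, z * g = g * z)
    (hinj : Function.Injective (fun n : ℤ => z ^ n))
    (hmiss : ∀ F : Set G, F.Finite → ∃ g, ∀ n : ℤ, z ^ n * g ∉ F)
    (F : Set G) (hF : F.Finite) :
    ∃ E : Set G, E.Finite ∧ ∀ f : G → H, (∀ s ∈ S, ∀ g, g ∉ F → f (s * g) = f g) →
      ∃ K, ∀ g, g ∉ E → f g = K := by
  refine ⟨{k | (∃ m : ℕ, z ^ m * k ∈ F) ∧ (∃ n : ℕ, z⁻¹ ^ n * k ∈ F)}, ?_, ?_⟩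
  · have : {k | (∃ m : ℕ, z ^ m * k ∈ F) ∧ (∃ n : ℕ, z⁻¹ ^ n * k ∈ F)} ⊆
        ⋃ p ∈ F, ⋃ q ∈ F, {k | ∃ m n : ℕ, z ^ m * k = p ∧ z⁻¹ ^ n * k = q} := by
      rintro k ⟨⟨m, hm⟩, n, hn⟩
      simp only [Set.mem_iUnion]
      exact ⟨_, hm, _, hn, m, n, rfl, rfl⟩
    refine Set.Finite.subset (hF.biUnion fun p _ => hF.biUnion fun q _ => ?_) this
    by_cases hne : ∃ N : ℕ, z ^ (N : ℤ) = p * q⁻¹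
    · obtain ⟨N, hN⟩ := hne
      refine ((Set.finite_Iic N).image (fun m : ℕ => (z ^ m)⁻¹ * p)).subset ?_
      rintro k ⟨m, n, rfl, rfl⟩
      refine ⟨m, ?_, by simp⟩
      have : (N : ℤ) = (m : ℤ) + n := by
        apply hinj
        simp only
        rw [hN, zpow_add]
        simp
      simp only [Set.mem_Iic]
      omega
    · convert Set.finite_empty
      rw [Set.eq_empty_iff_forall_notMem]
      rintro k ⟨m, n, rfl, rfl⟩
      apply hne
      refine ⟨m + n, ?_⟩
      push_cast
      rw [zpow_add]
      simp
  · intro f hf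
    obtain ⟨g₁, hg₁⟩ := hmiss F hF
    have hpos : ∀ k, (∀ m : ℕ, z ^ m * k ∉ F) → ∀ m : ℕ, f (z ^ m * k) = f k := by
      intro k hk m
      induction m with
      | zero => simp
      | succ m ih => rw [pow_succ', mul_assoc, hf z hzS _ (hk m), ih]
    have hneg : ∀ k, (∀ m : ℕ, z⁻¹ ^ m * k ∉ F) → ∀ m : ℕ, f (z⁻¹ ^ m * k) = f k := by
      intro k hk m
      induction m with
      | zero => simp
      | succ m ih =>
        rw [← ih, ← hf z hzS _ (hk (m+1)), pow_succ', mul_assoc, mul_inv_cancel_left]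
    have hzi : ∀ g, z⁻¹ * g = g * z⁻¹ := fun g =>
      (Commute.inv_left (show Commute z g from hz g)).eq
    have hev1 : ∀ g : G, ∀ᶠ n : ℕ in atTop, z ^ n * g ∉ F := by
      intro g
      rw [← Nat.cofinite_eq_atTop]
      have hi : Function.Injective (fun n : ℕ => z ^ n * g) := by
        intro m n h
        have h' := mul_right_cancel h
        have : (m : ℤ) = n := hinj (by simpa using h')
        exact_mod_cast this
      exact (hF.preimage hi.injOn).compl_mem_cofinite
    have hev2 : ∀ g : G, ∀ᶠ n : ℕ in atTop, z⁻¹ ^ n * g ∉ F := by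
      intro g
      rw [← Nat.cofinite_eq_atTop]
      have hi : Function.Injective (fun n : ℕ => z⁻¹ ^ n * g) := by
        intro m n h
        have h' := mul_right_cancel h
        have : (m : ℤ) = n := hinj (by simpa using h')
        exact_mod_cast this
      exact (hF.preimage hi.injOn).compl_mem_cofinite
    refine ⟨f g₁, fun g hg => ?_⟩
    rw [Set.mem_ofPred_eq, not_and_or] at hg
    rcases hg with hg | hg
    · push Not at hg
      have e := end_aux S hS z hz F hev1 f hf g₁ (f g₁)
        (hpos g₁ fun m => by simpa using hg₁ m) g
      obtain ⟨n, hn⟩ := e.exists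
      rw [← hn, hpos g hg]
    · push Not at hg
      have e := end_aux S hS z⁻¹ hzi F hev2 f hf g₁ (f g₁)
        (hneg g₁ fun m => by simpa using hg₁ (-m)) g
      obtain ⟨n, hn⟩ := e.exists
      rw [← hn, hneg g hg]

lemma finite_dep {G X₀ H : Type*} [TopologicalSpace X₀] [CompactSpace X₀]
    (f : (G → X₀) → H) (hf : IsLocallyConstant f) :
    ∃ F : Set G, F.Finite ∧ ∀ x y : G → X₀, (∀ g ∈ F, x g = y g) → f x = f y := by
  have h1 : ∀ x : G → X₀, ∃ (I : Finset G) (u : G → Set X₀),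
      (∀ a ∈ I, IsOpen (u a) ∧ x a ∈ u a) ∧ (I : Set G).pi u ⊆ f ⁻¹' {f x} := by
    intro x
    exact isOpen_pi_iff.1 (hf.isOpen_fiber (f x)) x rfl
  choose I u hu hsub using h1
  obtain ⟨t, ht⟩ := isCompact_univ.elim_finite_subcover
    (fun x => ((I x : Set G).pi (u x)))
    (fun x => isOpen_set_pi (I x).finite_toSet fun a ha => (hu x a ha).1)
    (fun x _ => Set.mem_iUnion.2 ⟨x, fun a ha => (hu x a ha).2⟩)
  refine ⟨⋃ x ∈ t, (I x : Set G), t.finite_toSet.biUnion fun x _ => (I x).finite_toSet, ?_⟩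
  intro x y hxy
  have hx := ht (Set.mem_univ x)
  simp only [Set.mem_iUnion] at hx
  obtain ⟨w, hwt, hw⟩ := hx
  have hy : y ∈ (I w : Set G).pi (u w) := by
    intro a ha
    rw [← hxy a (Set.mem_biUnion hwt ha)]
    exact hw a ha
  have e1 := hsub w hw
  have e2 := hsub w hy
  simp only [Set.mem_preimage, Set.mem_singleton_iff] at e1 e2
  rw [e1, e2]

open Filter in
/-- Cocycle rigidity. -/
lemma cocycle_rigid {G H X₀ : Type*} [Group G] [Group H]
    [TopologicalSpace X₀] [CompactSpace X₀] (p : X₀)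
    (S : Set G) (hSf : S.Finite) (hS : Subgroup.closure S = ⊤)
    (z : G) (hzS : z ∈ S) (hz : ∀ g, z * g = g * z)
    (hinj : Function.Injective (fun n : ℤ => z ^ n))
    (hmiss : ∀ F : Set G, F.Finite → ∃ g, ∀ n : ℤ, z ^ n * g ∉ F)
    (a : G → (G → X₀) → H) (hlc : ∀ g, IsLocallyConstant (a g))
    (hco : ∀ g g' x, a (g * g') x = a g (g' • x) * a g' x) :
    ∃ u : (G → X₀) → H, IsLocallyConstant u ∧
      ∀ g x, a g x = u (g • x) * a g (fun _ => p) * (u x)⁻¹ := by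
  classical
  have : Infinite G := Infinite.of_injective _ hinj
  choose Fs hFs hFdep using fun g => finite_dep (a g) (hlc g)
  let F : Set G := ⋃ s ∈ S, Fs s
  have hF : F.Finite := hSf.biUnion fun s _ => hFs s
  -- the comparison function is invariant off a finite set
  have inv : ∀ x y : G → X₀, ∀ s ∈ S, ∀ g, (∀ γ ∈ F, x (g⁻¹ * γ) = y (g⁻¹ * γ)) →
      (a (s * g) x)⁻¹ * a (s * g) y = (a g x)⁻¹ * a g y := by
    intro x y s hs g hg
    have : a s (g • x) = a s (g • y) :=
      hFdep s _ _ fun γ hγ => hg γ (Set.mem_biUnion hs hγ)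
    rw [hco, hco, this]
    group
  -- uniform constants
  have A : ∀ D : Set G, D.Finite → ∃ B : Set G, B.Finite ∧ ∀ x y : G → X₀,
      (∀ g, g ∉ D → x g = y g) → ∃ c, ∀ g, g ∉ B → (a g x)⁻¹ * a g y = c := by
    intro D hD
    obtain ⟨E, hE, h⟩ := one_end (H := H) S hS z hzS hz hinj hmiss
      (Set.image2 (fun γ d => γ * d⁻¹) F D) (hF.image2 _ hD)
    refine ⟨E, hE, fun x y hxy => h (fun g => (a g x)⁻¹ * a g y) ?_⟩
    intro s hs g hg
    refine inv x y s hs g fun γ hγ => hxy _ fun hd => hg ⟨γ, hγ, _, hd, ?_⟩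
    group
  obtain ⟨E, hE, hE1⟩ := one_end (H := H) S hS z hzS hz hinj hmiss F hF
  have B1 : ∀ d, d ∉ E → ∀ x y : G → X₀, (∀ g, g ≠ d → x g = y g) →
      ∀ᶠ g in cofinite, (a g x)⁻¹ * a g y = 1 := by
    intro d hd x y hxy
    obtain ⟨K, hK⟩ := hE1 (fun g => (a (g * d⁻¹) x)⁻¹ * a (g * d⁻¹) y) (by
      intro s hs g hg
      simp only [mul_assoc s]
      refine inv x y s hs _ fun γ hγ => hxy _ fun h => hg ?_
      have : g = γ := by
        have h2 : d * (g⁻¹ * γ) = d * 1 := by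
            rw [mul_inv_rev, inv_inv, mul_assoc] at h
            rw [h, mul_one]
        have h3 := mul_left_cancel h2
        exact inv_mul_eq_one.1 h3
      rwa [this])
    have hK1 : K = 1 := by
      rw [← hK d hd]
      have h1 : ∀ x, a 1 x = 1 := by
        intro x
        have := hco 1 1 x
        simpa using this
      simp [h1]
    have hfin : (Set.image (fun e => e * d⁻¹) E).Finite := hE.image _
    filter_upwards [hfin.compl_mem_cofinite] with g hg
    have := hK (g * d) fun h => hg ⟨_, h, by simp⟩
    simpa [hK1] using this
  have B2 : ∀ D : Finset G, (∀ d ∈ D, d ∉ E) → ∀ x y : G → X₀, (∀ g, g ∉ D → x g = y g) →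
      ∀ᶠ g in cofinite, (a g x)⁻¹ * a g y = 1 := by
    intro D
    induction D using Finset.induction_on with
    | empty =>
      intro _ x y h
      have : x = y := funext fun g => h g (by simp)
      subst this
      simp
    | insert d D hdD ih =>
      intro hD x y h
      have e1 := ih (fun d' hd' => hD d' (Finset.mem_insert_of_mem hd')) x
        (Function.update y d (x d)) (by
          intro g hg
          by_cases hgd : g = d
          · subst hgd; simp
          · rw [Function.update_of_ne hgd]
            exact h g (by simp [hgd, hg]))
      have e2 := B1 d (hD d (Finset.mem_insert_self _ _)) (Function.update y d (x d)) y
        (fun g hg => Function.update_of_ne hg _ _)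
      filter_upwards [e1, e2] with g h1 h2
      rw [inv_mul_eq_one] at h1 h2 ⊢
      rw [h1, h2]
  let x₀ : G → X₀ := fun _ => p
  let π : (G → X₀) → (G → X₀) := fun x g => if g ∈ E then x g else p
  have hπ : Continuous π := by
    refine continuous_pi fun g => ?_
    by_cases hg : g ∈ E
    · simpa [π, hg] using continuous_apply g
    · simpa [π, hg] using continuous_const
  obtain ⟨B, hB, hBc⟩ := A E hE
  obtain ⟨g₀, hg₀⟩ := hB.exists_notMem
  let u : (G → X₀) → H := fun x => (a g₀ (π x))⁻¹ * a g₀ x₀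
  have hu : IsLocallyConstant u := by
    have h1 : IsLocallyConstant (fun x => a g₀ (π x)) := (hlc g₀).comp_continuous hπ
    exact h1.comp (fun h => h⁻¹ * a g₀ x₀)
  have hu1 : ∀ x, ∀ᶠ g in cofinite, (a g (π x))⁻¹ * a g x₀ = u x := by
    intro x
    obtain ⟨c, hc⟩ := hBc (π x) x₀ (fun g hg => by simp [π, x₀, hg])
    filter_upwards [hB.compl_mem_cofinite] with g hg
    rw [hc g hg]
    exact (hc g₀ hg₀).symm
  have hu2 : ∀ x : G → X₀, {g | x g ≠ p}.Finite →
      ∀ᶠ g in cofinite, (a g x)⁻¹ * a g x₀ = u x := by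
    intro x hx
    have e1 := B2 (hx.toFinset \ hE.toFinset) (by simp) x (π x) (by
      intro g hg
      by_cases hgE : g ∈ E
      · simp [π, hgE]
      · simp only [Finset.mem_sdiff, Set.Finite.mem_toFinset, Set.mem_ofPred_eq, hgE,
          not_false_eq_true, and_true, not_not] at hg
        simp [π, hgE, hg])
    filter_upwards [e1, hu1 x] with g h1 h2
    rw [← h2, inv_mul_eq_one.1 h1]
  have hu3 : ∀ g (x : G → X₀), {g | x g ≠ p}.Finite →
      a g x = u (g • x) * a g x₀ * (u x)⁻¹ := by
    intro g x hx
    have hgx : {k | (g • x) k ≠ p}.Finite := by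
      refine (hx.image (fun k => g * k)).subset ?_
      intro k hk
      exact ⟨g⁻¹ * k, hk, by simp⟩
    have e1 := hu2 _ hgx
    have e2 : ∀ᶠ k in cofinite, (a (k * g) x)⁻¹ * a (k * g) x₀ = u x :=
      (mul_left_injective g).tendsto_cofinite.eventually (hu2 x hx)
    obtain ⟨k, h1, h2⟩ := (e1.and e2).exists
    have h0 : g • x₀ = x₀ := rfl
    rw [hco, hco, h0] at h2
    rw [← h1, ← h2]
    group
  refine ⟨u, hu, fun g x => ?_⟩
  have hR : IsLocallyConstant (fun x : G → X₀ => u (g • x) * a g x₀ * (u x)⁻¹) := by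
    have h1 : IsLocallyConstant (fun x : G → X₀ => u (g • x)) :=
      hu.comp_continuous (continuous_const_smul g)
    exact (h1.prodMk hu).comp (fun q : H × H => q.1 * a g x₀ * q.2⁻¹)
  obtain ⟨F2, hF2, hd2⟩ := finite_dep _ hR
  let x' : G → X₀ := fun k => if k ∈ Fs g ∪ F2 then x k else p
  have hx' : {k | x' k ≠ p}.Finite := by
    refine ((hFs g).union hF2).subset ?_
    intro k hk
    by_contra h
    exact hk (by simp only [x', if_neg h])
  have e1 := hFdep g x x' (fun k hk => by simp [x', hk])
  have e2 := hd2 x x' (fun k hk => by simp [x', hk])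
  rw [e1, hu3 g x' hx']
  exact e2.symm

/-- two group elements acting equally on a nonempty open set are equal -/
lemma eq_of_open {H Y : Type*} [Group H] [TopologicalSpace Y] [MulAction H Y]
    (hY : TopologicallyFree H Y) (U : Set Y) (hU : IsOpen U) (hne : U.Nonempty) (h k : H)
    (he : ∀ y ∈ U, h • y = k • y) : h = k := by
  by_contra hhk
  have h1 : k⁻¹ * h ≠ 1 := fun h' => hhk (inv_mul_eq_one.1 h').symm
  obtain ⟨y, hyU, hy⟩ := (hY _ h1).inter_open_nonempty U hU hne
  apply hy
  rw [mul_smul, he y hyU, inv_smul_smul]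

/-- Let `G` be a countable torsion-free group, `X₀` a nonempty compact Hausdorff
space, and suppose the Bernoulli shift `G ↷ X₀^G` is topologically free. Let `H` be
a finitely generated nilpotent group which is not virtually infinite cyclic, and let
`H ↷ Y` be a topologically free system. If `G ↷ X₀^G` and `H ↷ Y` are continuously
orbit equivalent, then they are conjugate. -/
theorem conjugate_of_coe_bernoulli_nilpotent
    (G : Type*) [Group G] [Countable G]
    (htf : ∀ g : G, g ≠ 1 → ¬IsOfFinOrder g)
    (X₀ : Type*) [TopologicalSpace X₀] [CompactSpace X₀] [T2Space X₀] [Nonempty X₀]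
    (hfree : TopologicallyFree G (G → X₀))
    (H : Type*) [Group H] [Group.FG H] [Group.IsNilpotent H]
    (hH : ¬ ∃ K : Subgroup H, K.index ≠ 0 ∧ IsCyclic K ∧ Infinite K)
    (Y : Type*) [TopologicalSpace Y] [LocallyCompactSpace Y] [T2Space Y]
    [MulAction H Y] [ContinuousConstSMul H Y]
    (hY : TopologicallyFree H Y)
    (hcoe : ContOrbitEquiv G (G → X₀) H Y) :
    Conjugate G (G → X₀) H Y := by
  obtain ⟨φ, a, b, ha, hb, hφ, hψ⟩ := hcoe
  obtain ⟨p⟩ := ‹Nonempty X₀›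
  -- cocycle identity
  have hco : ∀ g g' x, a (g * g') x = a g (g' • x) * a g' x := by
    intro g g' x
    have l2 : IsLocallyConstant (fun x => a g (g' • x)) :=
      (ha g).comp_continuous (continuous_const_smul g')
    have l3 := (l2.prodMk (ha g')).prodMk (ha (g * g'))
    have ho := l3.isOpen_fiber ((a g (g' • x), a g' x), a (g * g') x)
    refine eq_of_open hY _ (φ.isOpenMap _ ho) ⟨φ x, x, rfl, rfl⟩ _ _ ?_
    rintro _ ⟨w, hw, rfl⟩
    simp only [Set.mem_ofPred_eq, Prod.mk.injEq] at hw
    obtain ⟨⟨h1, h2⟩, h3⟩ := hw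
    rw [← h1, ← h2, ← h3, ← hφ, mul_smul, hφ, hφ, mul_smul]
  have hba : ∀ g x, b (a g x) (φ x) = g := by
    intro g x
    have l1 : IsLocallyConstant (fun w => b (a g x) (φ w)) :=
      (hb _).comp_continuous φ.continuous
    have ho := ((ha g).prodMk l1).isOpen_fiber (a g x, b (a g x) (φ x))
    refine eq_of_open hfree _ ho ⟨x, rfl⟩ _ _ ?_
    intro w hw
    simp only [Set.mem_ofPred_eq, Prod.mk.injEq] at hw
    obtain ⟨h1, h2⟩ := hw
    have e := hψ (a g x) (φ w)
    rw [φ.symm_apply_apply] at e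
    rw [← h2, ← e, ← h1, ← hφ, φ.symm_apply_apply]
  have hab : ∀ h y, a (b h y) (φ.symm y) = h := by
    intro h y
    have l1 : IsLocallyConstant (fun w => a (b h y) (φ.symm w)) :=
      (ha _).comp_continuous φ.symm.continuous
    have ho := ((hb h).prodMk l1).isOpen_fiber (b h y, a (b h y) (φ.symm y))
    refine eq_of_open hY _ ho ⟨y, rfl⟩ _ _ ?_
    intro w hw
    simp only [Set.mem_ofPred_eq, Prod.mk.injEq] at hw
    obtain ⟨h1, h2⟩ := hw
    have e := hφ (b h y) (φ.symm w)
    rw [φ.apply_symm_apply] at e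
    rw [← h2, ← e, ← h1, ← hψ, φ.apply_symm_apply]
  -- the isomorphism from the fixed point
  let x₀ : G → X₀ := fun _ => p
  have hfix : ∀ g : G, g • x₀ = x₀ := fun g => rfl
  let ρ : G ≃* H :=
    { toFun := fun g => a g x₀
      invFun := fun h => b h (φ x₀)
      left_inv := fun g => hba g x₀
      right_inv := fun h => by
        have := hab h (φ x₀)
        rwa [φ.symm_apply_apply] at this
      map_mul' := fun g g' => by
        show a (g * g') x₀ = _
        rw [hco, hfix] }
  have hρ : ∀ g, ρ g = a g x₀ := fun g => rfl
  rcases subsingleton_or_nontrivial G with hG | hG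
  · refine ⟨φ, ρ, fun g x => ?_⟩
    rw [Subsingleton.elim g 1, map_one, one_smul, one_smul]
  -- nilpotent structure
  have hnil : Group.IsNilpotent G := Group.nilpotent_of_mulEquiv ρ.symm
  have hfg : Group.FG G := Group.fg_of_surjective (f := ρ.symm.toMonoidHom) ρ.symm.surjective
  have hcen : Nontrivial (Subgroup.center G) :=
    (Subgroup.nontrivial_iff_ne_bot _).2 (Group.IsNilpotent.center_ne_bot G)
  obtain ⟨⟨z, hzc⟩, hz1⟩ := exists_ne (1 : Subgroup.center G)
  have hz1 : z ≠ 1 := fun h => hz1 (Subtype.ext h)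
  have hz : ∀ g, z * g = g * z := fun g => (Subgroup.mem_center_iff.1 hzc g).symm
  have hinj : Function.Injective (fun n : ℤ => z ^ n) :=
    injective_zpow_iff_not_isOfFinOrder.2 (htf z hz1)
  have hmiss : ∀ F : Set G, F.Finite → ∃ g, ∀ n : ℤ, z ^ n * g ∉ F := by
    intro F hF
    by_contra hcon
    push Not at hcon
    apply hH
    have hfi : (Subgroup.zpowers z).index ≠ 0 := by
      have : Finite (G ⧸ Subgroup.zpowers z) := by
        have hFf : Finite F := hF
        refine Finite.of_surjective (fun f : F => (QuotientGroup.mk f.1 : G ⧸ Subgroup.zpowers z)) ?_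
        intro q
        obtain ⟨g, rfl⟩ := QuotientGroup.mk_surjective q
        obtain ⟨n, hn⟩ := hcon g
        refine ⟨⟨_, hn⟩, ?_⟩
        refine QuotientGroup.eq.2 ?_
        have hc : z ^ n * g = g * z ^ n :=
          (Commute.zpow_left (show Commute z g from hz g) n).eq
        show (z ^ n * g)⁻¹ * g ∈ Subgroup.zpowers z
        rw [hc]
        refine ⟨-n, ?_⟩
        simp
      exact Subgroup.index_ne_zero_of_finite
    refine ⟨(Subgroup.zpowers z).map ρ.toMonoidHom, ?_, ?_, ?_⟩
    · have := Subgroup.index_map_equiv (Subgroup.zpowers z) ρ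
      rw [show (Subgroup.zpowers z).map ρ.toMonoidHom = (Subgroup.zpowers z).map (ρ : G →* H) from rfl, this]
      exact hfi
    · rw [MonoidHom.map_zpowers]
      infer_instance
    · rw [MonoidHom.map_zpowers]
      have h2 : ¬ IsOfFinOrder (ρ.toMonoidHom z) := by
        intro h
        have h3 := ρ.symm.toMonoidHom.isOfFinOrder h
        exact htf z hz1 (by simpa using h3)
      exact Set.infinite_coe_iff.2 (infinite_zpowers.2 h2)
  obtain ⟨S, hS, hSf⟩ := Group.fg_iff.1 hfg
  obtain ⟨u, hu, hua⟩ := cocycle_rigid p (insert z S) (hSf.insert z)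
    (by rw [eq_top_iff, ← hS]; exact Subgroup.closure_mono (Set.subset_insert _ _))
    z (Set.mem_insert _ _) hz hinj hmiss a ha hco
  have hua : ∀ g x, a g x = u (g • x) * ρ g * (u x)⁻¹ := hua
  have eq1 : ∀ (g : G) x, (u (g • x))⁻¹ • φ (g • x) = ρ g • (u x)⁻¹ • φ x := by
    intro g x
    rw [hφ, hua]
    simp only [← mul_smul]
    congr 1
    group
  have eq2 : ∀ (h : H) y, ρ.symm (u (φ.symm (h • y))) • φ.symm (h • y) =
      ρ.symm h • ρ.symm (u (φ.symm y)) • φ.symm y := by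
    intro h y
    have e := hua (b h y) (φ.symm y)
    rw [hab, ← hψ] at e
    have e' : u (φ.symm (h • y)) * ρ (b h y) = h * u (φ.symm y) := by
      rw [eq_mul_inv_iff_mul_eq] at e
      exact e.symm
    rw [← mul_smul, ← map_mul, ← e', map_mul, ρ.symm_apply_apply, mul_smul, ← hψ]
  have cont1 : Continuous fun x => (u x)⁻¹ • φ x := by
    rw [continuous_iff_continuousAt]
    intro x
    have h1 : (fun w => (u x)⁻¹ • φ w) =ᶠ[nhds x] fun w => (u w)⁻¹ • φ w := by
      filter_upwards [(IsLocallyConstant.iff_eventually_eq u).1 hu x] with w hw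
      rw [hw]
    exact ((φ.continuous.const_smul (u x)⁻¹).continuousAt).congr h1
  have cont2 : Continuous fun y => ρ.symm (u (φ.symm y)) • φ.symm y := by
    have hu' : IsLocallyConstant (fun y => u (φ.symm y)) := hu.comp_continuous φ.symm.continuous
    rw [continuous_iff_continuousAt]
    intro y
    have h1 : (fun w => ρ.symm (u (φ.symm y)) • φ.symm w) =ᶠ[nhds y]
        fun w => ρ.symm (u (φ.symm w)) • φ.symm w := by
      filter_upwards [(IsLocallyConstant.iff_eventually_eq _).1 hu' y] with w hw
      rw [hw]
    exact ((φ.symm.continuous.const_smul (ρ.symm (u (φ.symm y)))).continuousAt).congr h1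
  let Φ : (G → X₀) ≃ₜ Y :=
    { toFun := fun x => (u x)⁻¹ • φ x
      invFun := fun y => ρ.symm (u (φ.symm y)) • φ.symm y
      left_inv := fun x => by
        show ρ.symm (u (φ.symm ((u x)⁻¹ • φ x))) • φ.symm ((u x)⁻¹ • φ x) = x
        rw [eq2, φ.symm_apply_apply, ← mul_smul, ← map_mul, inv_mul_cancel, map_one, one_smul]
      right_inv := fun y => by
        show (u (ρ.symm (u (φ.symm y)) • φ.symm y))⁻¹ • φ (ρ.symm (u (φ.symm y)) • φ.symm y) = y
        rw [eq1, ρ.apply_symm_apply, smul_inv_smul, φ.apply_symm_apply]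
      continuous_toFun := cont1
      continuous_invFun := cont2 }
  exact ⟨Φ, ρ, eq1⟩
end

section
/- Let G and H be countable groups, and let G ↷ X and H ↷ Y be topologically free systems on compact Hausdorff spaces which admit a continuous orbit couple (p, q, a, b, g, h). Then there exists a topologically free topological coupling for G and H. Concretely, Ω = X × H with the G-action γ.(x, η) = (γ.x, a(γ, x)·η) and the right H-action (x, η).η' = (x, η·η') is such a coupling: the two actions commute, X × {e} is a compact open fundamental domain for the H-action, there is a compact open fundamental domain for the G-action, and the combined G × H-action on Ω is topologically free. -/
/-- The left `G`-action on `Ω = X × H`: `γ.(x, η) = (γ.x, a(γ, x)·η)`. -/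
def Lact {G X H : Type*} [Group G] [Group H] [MulAction G X]
    (a : G → X → H) (γ : G) (z : X × H) : X × H :=
  (γ • z.1, a γ z.1 * z.2)

/-- The right `H`-action on `Ω = X × H`: `(x, η).η' = (x, η·η')`. -/
def Ract {X H : Type*} [Group H] (z : X × H) (η' : H) : X × H :=
  (z.1, z.2 * η')


lemma aux_sep {Z K W : Type*} [TopologicalSpace Z] [Group K] [TopologicalSpace K]
    [DiscreteTopology K] [TopologicalSpace W] [MulAction K W]
    (hW : TopologicallyFree K W) (r : Z → W) (hr : IsOpenMap r)
    (f₁ f₂ : Z → K) (h₁ : Continuous f₁) (h₂ : Continuous f₂) (z₀ : Z)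
    (h : ∀ᶠ z in nhds z₀, f₁ z • r z = f₂ z • r z) : f₁ z₀ = f₂ z₀ := by
  by_contra hne
  have hne' : (f₂ z₀)⁻¹ * f₁ z₀ ≠ 1 := by
    intro h0
    exact hne (inv_mul_eq_one.mp h0).symm
  have hd : Dense (r ⁻¹' {x : W | ((f₂ z₀)⁻¹ * f₁ z₀) • x ≠ x}) := (hW _ hne').preimage hr
  have e₁ : ∀ᶠ z in nhds z₀, f₁ z = f₁ z₀ :=
    h₁.continuousAt.eventually (by simp [nhds_discrete] : ∀ᶠ k in nhds (f₁ z₀), k = f₁ z₀)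
  have e₂ : ∀ᶠ z in nhds z₀, f₂ z = f₂ z₀ :=
    h₂.continuousAt.eventually (by simp [nhds_discrete] : ∀ᶠ k in nhds (f₂ z₀), k = f₂ z₀)
  obtain ⟨z, hz, h1, h2, h3⟩ := mem_closure_iff_nhds.mp (hd z₀) _ (h.and (e₁.and e₂)) |>.imp
    (fun z hz => (⟨hz.2, hz.1⟩ : _ ∧ _ ∧ _ ∧ _))
  apply hz
  rw [mul_smul, inv_smul_eq_iff, ← h2, ← h3, h1]

lemma aux_open {G X H Y : Type*} [Group G] [Group H]
    [TopologicalSpace X] [TopologicalSpace Y]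
    [MulAction G X] [ContinuousConstSMul G X] [MulAction H Y]
    (p : X → Y) (q : Y → X) (hp : Continuous p) (hq : Continuous q)
    (gg : X → G) (hh : Y → H)
    (hgg : IsLocallyConstant gg) (hhh : IsLocallyConstant hh)
    (hqp : ∀ x : X, q (p x) = gg x • x)
    (hpq : ∀ y : Y, p (q y) = hh y • y) : IsOpenMap p := by
  rw [isOpenMap_iff_nhds_le]
  intro x₀ S hS
  have hS' : p ⁻¹' S ∈ nhds x₀ := hS
  obtain ⟨O, hOS, hO, hxO⟩ := mem_nhds_iff.mp hS'
  let V : Set Y := {y | hh y = hh (p x₀)}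
  let W : Set X := O ∩ {x | gg x = gg x₀} ∩ p ⁻¹' V
  have hV : IsOpen V := hhh.isOpen_fiber _
  have hW : IsOpen W := (hO.inter (hgg.isOpen_fiber _)).inter (hV.preimage hp)
  have hgW : IsOpen ((fun x => gg x₀ • x) '' W) := (isOpenMap_smul (gg x₀)) W hW
  have hN : IsOpen (V ∩ q ⁻¹' ((fun x => gg x₀ • x) '' W)) := hV.inter (hgW.preimage hq)
  refine Filter.mem_of_superset (hN.mem_nhds ⟨rfl, x₀, ⟨⟨hxO, rfl⟩, rfl⟩, (hqp x₀).symm⟩) ?_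
  rintro y ⟨hyV, w, hw, hwy⟩
  have h1 : q (p w) = q y := by
    rw [hqp, hw.1.2]; exact hwy
  have h2 := congrArg p h1
  rw [hpq, hpq, show hh y = hh (p x₀) from hyV, show hh (p w) = hh (p x₀) from hw.2] at h2
  have h3 : p w = y := smul_left_cancel _ h2
  rw [← h3]
  exact hOS hw.1.1

/-- Let `G ↷ X` and `H ↷ Y` be topologically free systems on compact Hausdorff
spaces admitting a continuous orbit couple `(p, q, a, b, g, h)`. Then `Ω = X × H`
with the actions `γ.(x, η) = (γ.x, a(γ, x)·η)` and `(x, η).η' = (x, η·η')` is a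
topologically free topological coupling for `G` and `H`: the actions commute,
`X × {1}` is a compact open fundamental domain for the `H`-action, there is a
compact open fundamental domain for the `G`-action, and the combined
`G × H`-action is topologically free. -/
theorem topological_coupling_of_continuous_orbit_couple
    (G : Type*) (X : Type*) (H : Type*) (Y : Type*)
    [Group G] [Countable G] [Group H] [Countable H]
    [TopologicalSpace X] [CompactSpace X] [T2Space X]
    [TopologicalSpace Y] [CompactSpace Y] [T2Space Y]
    [TopologicalSpace G] [DiscreteTopology G] [TopologicalSpace H] [DiscreteTopology H]
    [MulAction G X] [ContinuousConstSMul G X]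
    [MulAction H Y] [ContinuousConstSMul H Y]
    (hX : TopologicallyFree G X) (hY : TopologicallyFree H Y)
    (p : X → Y) (q : Y → X) (hp : Continuous p) (hq : Continuous q)
    (a : G → X → H) (b : H → Y → G) (gg : X → G) (hh : Y → H)
    (ha : ∀ γ : G, IsLocallyConstant (a γ))
    (hb : ∀ η : H, IsLocallyConstant (b η))
    (hgg : IsLocallyConstant gg) (hhh : IsLocallyConstant hh)
    (hpa : ∀ (γ : G) (x : X), p (γ • x) = a γ x • p x)
    (hqb : ∀ (η : H) (y : Y), q (η • y) = b η y • q y)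
    (hqp : ∀ x : X, q (p x) = gg x • x)
    (hpq : ∀ y : Y, p (q y) = hh y • y) :
    (∀ (γ : G) (η' : H) (z : X × H), Lact a γ (Ract z η') = Ract (Lact a γ z) η') ∧
    IsCompact ((Set.univ : Set X) ×ˢ ({1} : Set H)) ∧
    IsOpen ((Set.univ : Set X) ×ˢ ({1} : Set H)) ∧
    (∃ e : X × H ≃ₜ X × H, ∀ (x : X) (η : H), e (x, η) = Ract (x, 1) η) ∧
    (∃ Ybar : Set (X × H), IsCompact Ybar ∧ IsOpen Ybar ∧
      ∃ e : G × Ybar ≃ₜ X × H, ∀ (γ : G) (z : Ybar), e (γ, z) = Lact a γ (z : X × H)) ∧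
    (∀ (γ : G) (η : H), ¬(γ = 1 ∧ η = 1) →
      Dense {z : X × H | Lact a γ (Ract z η⁻¹) ≠ z}) := by
  have hpo : IsOpenMap p := aux_open p q hp hq gg hh hgg hhh hqp hpq
  have hcoc : ∀ γ₁ γ₂ x, a (γ₁ * γ₂) x = a γ₁ (γ₂ • x) * a γ₂ x := by
    intro γ₁ γ₂ x
    refine aux_sep hY p hpo (fun x => a (γ₁ * γ₂) x) (fun x => a γ₁ (γ₂ • x) * a γ₂ x)
      (ha _).continuous
      (((ha _).continuous.comp (continuous_const_smul γ₂)).mul (ha _).continuous) x ?_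
    refine Filter.Eventually.of_forall fun x => ?_
    rw [← hpa, mul_smul, mul_smul, hpa, hpa]
  have ha1 : ∀ x, a 1 x = 1 := by
    intro x
    have := hcoc 1 1 x
    simpa using this
  have hLmul : ∀ γ₁ γ₂ z, Lact a (γ₁ * γ₂) z = Lact a γ₁ (Lact a γ₂ z) := by
    intro γ₁ γ₂ z
    simp [Lact, hcoc, mul_smul, mul_assoc]
  have hL1 : ∀ z : X × H, Lact a 1 z = z := by
    intro z
    simp [Lact, ha1]
  have hLc : Continuous (fun w : G × (X × H) => Lact a w.1 w.2) := by
    rw [continuous_prod_of_discrete_left]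
    intro γ
    have h1 := (ha γ).continuous
    have h2 : Continuous (fun x : X => γ • x) := continuous_const_smul γ
    unfold Lact
    exact (h2.comp continuous_fst).prodMk ((h1.comp continuous_fst).mul continuous_snd)
  have hπc : Continuous (fun z : X × H => z.2⁻¹ • p z.1) := by
    rw [continuous_prod_of_discrete_right]
    intro η
    exact hp.const_smul η⁻¹
  have hbc : Continuous (fun z : X × H => b z.2⁻¹ (p z.1) * gg z.1) := by
    rw [continuous_prod_of_discrete_right]
    intro η
    exact ((hb η⁻¹).continuous.comp hp).mul hgg.continuous
  obtain ⟨d, hd⟩ : ∃ d : X × H → G, d = fun z => b z.2⁻¹ (p z.1) * gg z.1 := ⟨_, rfl⟩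
  rw [← hd] at hbc
  have hdq : ∀ z : X × H, q (z.2⁻¹ • p z.1) = d z • z.1 := by
    intro z
    rw [hd, hqb, hqp, mul_smul]
  have hLγ : ∀ γ : G, Continuous (Lact a γ : X × H → X × H) := fun γ =>
    hLc.comp (continuous_const.prodMk continuous_id)
  have hdL : ∀ γ z, d (Lact a γ z) * γ = d z := by
    intro γ z
    refine aux_sep hX Prod.fst isOpenMap_fst (fun z : X × H => d (Lact a γ z) * γ) d
      ((hbc.comp (hLγ γ)).mul continuous_const) hbc z ?_
    refine Filter.Eventually.of_forall fun z => ?_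
    have h1 := hdq (Lact a γ z)
    rw [← hdq, mul_smul]
    simp only [Lact] at h1 ⊢
    rw [← h1, hpa, mul_inv_rev, mul_smul, inv_smul_smul]
  have hop : IsOpen (d ⁻¹' {1}) := (isOpen_discrete _).preimage hbc
  have hcl : IsClosed (d ⁻¹' {1}) := (isClosed_discrete _).preimage hbc
  have hfin : ∀ z : X × H, d z = 1 → z.2 = hh (z.2⁻¹ • p z.1) := by
    intro z hz
    have h1 : hh (z.2⁻¹ • p z.1) * z.2⁻¹ = 1 := by
      refine aux_sep hY (fun z : X × H => p z.1) (hpo.comp isOpenMap_fst)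
        (fun z : X × H => hh (z.2⁻¹ • p z.1) * z.2⁻¹) (fun _ => 1)
        ((hhh.continuous.comp hπc).mul (continuous_of_discreteTopology.comp continuous_snd))
        continuous_const z ?_
      filter_upwards [hop.mem_nhds hz] with w hw
      have hw' : d w = 1 := hw
      have h2 := hdq w
      rw [hw', one_smul] at h2
      rw [mul_smul, ← hpq, h2, one_smul]
    exact (mul_inv_eq_one.mp h1).symm
  have hcomp : IsCompact (d ⁻¹' {1}) := by
    have hK : IsCompact ((Set.univ : Set X) ×ˢ (Set.range hh)) :=
      isCompact_univ.prod (isCompact_range hhh.continuous)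
    refine hK.of_isClosed_subset hcl ?_
    intro z hz
    exact ⟨trivial, _, (hfin z hz).symm⟩
  refine ⟨?_, ?_, ?_, ?_, ?_, ?_⟩
  · intro γ η z
    simp [Lact, Ract, mul_assoc]
  · exact isCompact_univ.prod isCompact_singleton
  · exact isOpen_univ.prod (isOpen_discrete _)
  · exact ⟨Homeomorph.refl _, fun x η => by simp [Ract]⟩
  · refine ⟨d ⁻¹' {1}, hcomp, hop, ?_⟩
    have hmem : ∀ z, Lact a (d z) z ∈ d ⁻¹' {1} := by
      intro z
      have := hdL (d z) z
      simpa using this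
    have hci : Continuous (fun z => ((d z)⁻¹ : G)) :=
      continuous_of_discreteTopology.comp hbc
    refine ⟨{ toFun := fun w => Lact a w.1 (w.2 : X × H)
              invFun := fun z => ((d z)⁻¹, ⟨Lact a (d z) z, hmem z⟩)
              left_inv := ?_
              right_inv := ?_
              continuous_toFun := hLc.comp
                (continuous_fst.prodMk (continuous_subtype_val.comp continuous_snd))
              continuous_invFun := hci.prodMk
                ((hLc.comp (hbc.prodMk continuous_id)).subtype_mk hmem) }, fun γ z => rfl⟩
    · rintro ⟨γ, z, hz⟩
      have hz' : d z = 1 := hz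
      have h1 : d (Lact a γ z) = γ⁻¹ := by
        rw [← mul_eq_one_iff_eq_inv, hdL, hz']
      refine Prod.ext ?_ (Subtype.ext ?_)
      · simp [h1]
      · simp only [h1]
        rw [← hLmul, inv_mul_cancel, hL1]
    · intro z
      simp only
      rw [← hLmul, inv_mul_cancel, hL1]
  · intro γ η hne
    by_cases hγ : γ = 1
    · subst hγ
      have hη : η ≠ 1 := fun h => hne ⟨rfl, h⟩
      convert dense_univ
      ext z
      simp only [Set.mem_ofPred_eq, Set.mem_univ, iff_true, hL1]
      intro h
      have := congrArg Prod.snd h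
      simp [Ract] at this
      exact hη this
    · refine ((hX γ hγ).preimage (isOpenMap_fst (X := X) (Y := H))).mono ?_
      intro z hz h
      exact hz (congrArg Prod.fst h)
end
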